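/- arXiv:1504.02583 — 2 statements merged into one kernel-verified Lean document; each statement's English description precedes it below -/
import Mathlib

section
/- Let γ, δ ∈ (0,1) be such that γ < (δ/(2(1−γ)))·e^{−1/(1−γ)} − (δ^{3/2}/(6(1−γ)²))·e^{−7/(8(1−γ))}. Then there is an integer R so that for all r ≥ R, every simple graph G with maximum degree at most r, in which for every vertex v the neighborhood N(v) induces a subgraph with at most (1−δ)·(r choose 2) edges, satisfies χ(G) ≤ (1−γ)·r. -/
/-!
Regularize first: joining two copies of `G` at the vertices of too small degree keeps neighbourhoods
as sparse as they were, so `G` may be taken `r`-regular. Colour every vertex at random with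
`k = ⌊(1 - γ) r⌋` colours and let a fair coin decide which endpoint of a monochromatic edge loses
its colour. The partial colouring that remains extends greedily as soon as the repetitions of
colours among the neighbours of each vertex `v` save more than `r - k` colours.

A colour kept by `m` neighbours saves `min (m - 1) 2`, which is at least `C(m, 2) - C(m, 3)`; hence
the expected savings at `v` are bounded below through the independent pairs in `N(v)`, at least
`δ C(r, 2)` in number, minus the independent triples, whose number is at most of the order of the
`3 / 2`-th power of that of the pairs. Exposing first the draws in `N(v)` and then the others, an
exponential moment bound shows that the savings fall short with probability exponentially small in
`r`, and the Lovász local lemma makes all vertices succeed at once.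
-/

universe u

namespace RandomColoring

open Finset Function
open scoped BigOperators

section DependsOn

variable {ι β : Type*} [DecidableEq ι] {Ω : ι → Type*} {f : (∀ i, Ω i) → β} {S : Set ι}

theorem apply_update_of_dependsOn (hf : DependsOn f S) {i : ι} (hi : i ∉ S) (ω : ∀ i, Ω i)
    (a : Ω i) : f (update ω i a) = f ω :=
  hf fun _ hj => update_of_ne (ne_of_mem_of_not_mem hj hi) a ω

end DependsOn

section Prob

variable {Ω : Type*} [Fintype Ω] {A B : Set Ω}

/-- The probability of the event `A` under the uniform distribution on `Ω`. -/
noncomputable def prob (A : Set Ω) : ℝ :=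
  𝔼 ω, A.indicator 1 ω

theorem prob_nonneg (A : Set Ω) : 0 ≤ prob A :=
  expect_nonneg fun ω _ => Set.indicator_nonneg (fun _ _ => zero_le_one) ω

theorem prob_empty : prob (∅ : Set Ω) = 0 := by
  simp [prob]

theorem prob_univ [Nonempty Ω] : prob (Set.univ : Set Ω) = 1 := by
  simp [prob]

theorem prob_mono (h : A ⊆ B) : prob A ≤ prob B :=
  expect_le_expect fun _ _ => Set.indicator_le_indicator_of_subset h (fun _ => zero_le_one) _

theorem prob_le_add_sum {β : Type*} {s : Finset β} {C : β → Set Ω} (h : A ⊆ B ∪ ⋃ w ∈ s, C w) :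
    prob A ≤ prob B + ∑ w ∈ s, prob (C w) := by
  simp only [prob]
  rw [← expect_sum_comm, ← expect_add_distrib]
  refine expect_le_expect fun ω _ => ?_
  have hnonneg (D : Set Ω) : 0 ≤ D.indicator (1 : Ω → ℝ) ω :=
    Set.indicator_nonneg (fun _ _ => zero_le_one) ω
  refine Set.indicator_apply_le' (fun hω => ?_)
    fun _ => add_nonneg (hnonneg B) (sum_nonneg fun w _ => hnonneg (C w))
  rcases h hω with hB | hC
  · simpa [hB] using sum_nonneg fun w (_ : w ∈ s) => hnonneg (C w)
  · obtain ⟨w, hw, hωw⟩ : ∃ w ∈ s, ω ∈ C w := by simpa using hC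
    have := single_le_sum (fun w _ => hnonneg (C w)) hw
    simp only [Set.indicator_of_mem hωw] at this
    exact this.trans (le_add_of_nonneg_left (hnonneg B))

end Prob

section FiniteProduct

variable {ι : Type*} [DecidableEq ι] {Ω : ι → Type*} [∀ i, Fintype (Ω i)]
  {f g : (∀ i, Ω i) → ℝ}

/-- The conditional expectation of `f` given all coordinates other than `i`, the coordinates being
independent and uniform. -/
noncomputable def avgAt (i : ι) (f : (∀ i, Ω i) → ℝ) (ω : ∀ i, Ω i) : ℝ :=
  𝔼 a, f (update ω i a)

theorem dependsOn_avgAt {i : ι} {S : Set ι} (hf : DependsOn f (insert i S)) :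
    DependsOn (avgAt i f) S := fun ω ω' h =>
  expect_congr rfl fun a _ => hf fun j hj => by
    rcases eq_or_ne j i with rfl | hji
    · simp
    · simpa [hji] using h j (hj.resolve_left hji)

theorem avgAt_mul_of_dependsOn {S : Set ι} (hf : DependsOn f S) {i : ι} (hi : i ∉ S)
    (ω : ∀ i, Ω i) : avgAt i (fun ω => f ω * g ω) ω = f ω * avgAt i g ω := by
  simp only [avgAt, apply_update_of_dependsOn hf hi, mul_expect]

variable [Fintype ι] [∀ i, Nonempty (Ω i)]

theorem expect_avgAt (i : ι) (f : (∀ i, Ω i) → ℝ) : 𝔼 ω, avgAt i f ω = 𝔼 ω, f ω := by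
  have hswap : Involutive fun p : (∀ i, Ω i) × Ω i => (update p.1 i p.2, p.1 i) := fun p => by simp
  calc 𝔼 ω, avgAt i f ω = 𝔼 p : (∀ i, Ω i) × Ω i, f (update p.1 i p.2) :=
        (expect_product' univ univ fun ω a => f (update ω i a)).symm
    _ = 𝔼 p : (∀ i, Ω i) × Ω i, f p.1 := Fintype.expect_bijective _ hswap.bijective _ _ fun _ => rfl
    _ = 𝔼 ω, f ω := by simp [← univ_product_univ, expect_product]

-- Resampling the coordinates in `S` from an independent copy decouples `f` from `g`.
theorem expect_mul_of_dependsOn {S : Set ι} (hf : DependsOn f S) (hg : DependsOn g Sᶜ) :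
    𝔼 ω, f ω * g ω = (𝔼 ω, f ω) * 𝔼 ω, g ω := by
  classical
  have hswap : Involutive fun p : (∀ i, Ω i) × (∀ i, Ω i) =>
      (S.piecewise p.1 p.2, S.piecewise p.2 p.1) := fun p => by
    ext i <;> by_cases hi : i ∈ S <;> simp [hi]
  symm
  calc (𝔼 ω, f ω) * 𝔼 ω, g ω = 𝔼 p : (∀ i, Ω i) × (∀ i, Ω i), f p.1 * g p.2 := by
        rw [Fintype.expect_mul_expect, ← univ_product_univ, expect_product]
    _ = 𝔼 p : (∀ i, Ω i) × (∀ i, Ω i), f p.1 * g p.1 :=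
        Fintype.expect_bijective _ hswap.bijective _ _ fun p => by
          have hfp : f (S.piecewise p.1 p.2) = f p.1 :=
            hf fun i hi => S.piecewise_eq_of_mem _ _ hi
          have hgp : g (S.piecewise p.1 p.2) = g p.2 :=
            hg fun i hi => S.piecewise_eq_of_notMem _ _ hi
          rw [hfp, hgp]
    _ = 𝔼 ω, f ω * g ω := by simp [← univ_product_univ, expect_product]

theorem prob_inter_of_dependsOn {A B : Set (∀ i, Ω i)} {S : Set ι} (hA : DependsOn (· ∈ A) S)
    (hB : DependsOn (· ∈ B) Sᶜ) : prob (A ∩ B) = prob A * prob B := by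
  have hind {D : Set (∀ i, Ω i)} {R : Set ι} (hD : DependsOn (· ∈ D) R) :
      DependsOn (D.indicator (1 : (∀ i, Ω i) → ℝ)) R := fun ω ω' h => by
    classical simp only [Set.indicator_apply, Pi.one_apply, hD h]
  rw [prob, Set.inter_indicator_one]
  exact expect_mul_of_dependsOn (hind hA) (hind hB)

theorem expect_mul_prod_of_dependsOn {g : ι → (∀ i, Ω i) → ℝ} {q : ι → ℝ} {T : Finset ι}
    (hf : DependsOn f (T : Set ι)ᶜ) (hg : ∀ i ∈ T, DependsOn (g i) (insert i (T : Set ι)ᶜ))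
    (hq : ∀ i ∈ T, ∀ ω, f ω * avgAt i (g i) ω = f ω * q i) :
    𝔼 ω, f ω * ∏ i ∈ T, g i ω = (𝔼 ω, f ω) * ∏ i ∈ T, q i := by
  induction T using Finset.induction_on generalizing f with
  | empty => simp
  | insert i T hi ih =>
    have hle : ((insert i T : Finset ι) : Set ι)ᶜ ⊆ (T : Set ι)ᶜ :=
      Set.compl_subset_compl.2 (coe_subset.2 (subset_insert i T))
    have hcompl : insert i ((insert i T : Finset ι) : Set ι)ᶜ ⊆ (T : Set ι)ᶜ :=
      Set.insert_subset (by simpa using hi) hle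
    have hgi := (hg i (mem_insert_self i T)).mono hcompl
    have hfg : DependsOn (fun ω => f ω * g i ω) (T : Set ι)ᶜ := fun ω ω' h => by
      simp only [hf.mono hle h, hgi h]
    have key : 𝔼 ω, f ω * g i ω = (𝔼 ω, f ω) * q i := by
      rw [← expect_avgAt i, expect_mul]
      refine expect_congr rfl fun ω _ => ?_
      rw [avgAt_mul_of_dependsOn hf (by simp), hq i (mem_insert_self i T)]
    calc 𝔼 ω, f ω * ∏ j ∈ insert i T, g j ω = 𝔼 ω, f ω * g i ω * ∏ j ∈ T, g j ω := by
          simp only [prod_insert hi, mul_assoc]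
      _ = (𝔼 ω, f ω * g i ω) * ∏ j ∈ T, q j := by
          refine ih hfg (fun j hj => (hg j (mem_insert_of_mem hj)).mono
            (Set.insert_subset_insert hle)) fun j hj ω => ?_
          rw [mul_right_comm, hq j (mem_insert_of_mem hj), mul_right_comm]
      _ = (𝔼 ω, f ω) * ∏ j ∈ insert i T, q j := by rw [key, prod_insert hi, mul_assoc]

theorem expect_boole_forall_mem {P : ∀ i, Ω i → Prop} [∀ i, DecidablePred (P i)] {q : ℝ}
    (hP : ∀ i, 𝔼 a, (if P i a then (1 : ℝ) else 0) = q) (S : Finset ι) :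
    𝔼 ω : ∀ i, Ω i, (if ∀ i ∈ S, P i (ω i) then (1 : ℝ) else 0) = q ^ #S := by
  have hone : DependsOn (fun _ : ∀ i, Ω i => (1 : ℝ)) (S : Set ι)ᶜ := fun _ _ _ => rfl
  have h := expect_mul_prod_of_dependsOn (g := fun i ω => if P i (ω i) then (1 : ℝ) else 0)
    (q := fun _ => q) hone (fun i _ ω ω' h => by simp only [h i (Set.mem_insert i _)])
    fun i _ ω => by simp only [avgAt, update_self, hP]
  simpa [prod_boole] using h

end FiniteProduct

section Concentration

section OneVariable

variable {α : Type*} [Fintype α] [Nonempty α] {φ c : α → ℝ}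

theorem abs_sub_expect_le (h : ∀ a b, |φ a - φ b| ≤ c a + c b) (a : α) :
    |φ a - 𝔼 b, φ b| ≤ c a + 𝔼 b, c b := by
  calc |φ a - 𝔼 b, φ b| = |𝔼 b, (φ a - φ b)| := by
        rw [expect_sub_distrib, Fintype.expect_const]
    _ ≤ 𝔼 b, |φ a - φ b| := abs_expect_le _ _
    _ ≤ 𝔼 b, (c a + c b) := expect_le_expect fun b _ => h a b
    _ = c a + 𝔼 b, c b := by rw [expect_add_distrib, Fintype.expect_const]

theorem sq_expect_le_expect_sq (c : α → ℝ) : (𝔼 a, c a) ^ 2 ≤ 𝔼 a, c a ^ 2 := by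
  simpa using expect_mul_sq_le_sq_mul_sq univ c fun _ => 1

theorem expect_sq_sub_expect_le (h : ∀ a b, |φ a - φ b| ≤ c a + c b) :
    𝔼 a, (φ a - 𝔼 b, φ b) ^ 2 ≤ 4 * 𝔼 a, c a ^ 2 := by
  calc 𝔼 a, (φ a - 𝔼 b, φ b) ^ 2
      ≤ 𝔼 a, (2 * c a ^ 2 + 2 * (𝔼 b, c b) ^ 2) := expect_le_expect fun a _ => by
        have := sq_le_sq' (by linarith [neg_abs_le (φ a - 𝔼 b, φ b), abs_sub_expect_le h a])
          ((le_abs_self _).trans (abs_sub_expect_le h a))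
        linarith [sq_nonneg (c a - 𝔼 b, c b)]
    _ = 2 * 𝔼 a, c a ^ 2 + 2 * (𝔼 b, c b) ^ 2 := by
        rw [expect_add_distrib, Fintype.expect_const, mul_expect]
    _ ≤ 4 * 𝔼 a, c a ^ 2 := by linarith [sq_expect_le_expect_sq c]

theorem expect_exp_le_of_expect_eq_zero {X : α → ℝ} (hX : ∀ a, |X a| ≤ 1) (h0 : 𝔼 a, X a = 0) :
    𝔼 a, Real.exp (X a) ≤ Real.exp (𝔼 a, X a ^ 2) := by
  calc 𝔼 a, Real.exp (X a) ≤ 𝔼 a, (1 + X a + X a ^ 2) := expect_le_expect fun a _ => by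
        linarith [le_abs_self (Real.exp (X a) - 1 - X a), Real.abs_exp_sub_one_sub_id_le (hX a)]
    _ = 𝔼 a, X a ^ 2 + 1 := by
        rw [expect_add_distrib, expect_add_distrib, h0, Fintype.expect_const]; ring
    _ ≤ Real.exp (𝔼 a, X a ^ 2) := Real.add_one_le_exp _

theorem expect_exp_neg_mul_le {l B : ℝ} (h : ∀ a b, |φ a - φ b| ≤ c a + c b) (hB : ∀ a, c a ≤ B)
    (hl : 0 ≤ l) (hlB : 2 * l * B ≤ 1) :
    𝔼 a, Real.exp (-(l * φ a)) ≤ Real.exp (4 * l ^ 2 * 𝔼 a, c a ^ 2 - l * 𝔼 a, φ a) := by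
  set μ := 𝔼 a, φ a with hμ
  have hsmall : ∀ a, |-(l * (φ a - μ))| ≤ 1 := fun a => by
    have hdev : |φ a - μ| ≤ 2 * B := by
      linarith [abs_sub_expect_le h a, hB a, expect_le univ_nonempty fun a _ => hB a]
    rw [abs_neg, abs_mul, abs_of_nonneg hl]
    linarith [mul_le_mul_of_nonneg_left hdev hl]
  have hcentred : 𝔼 a, -(l * (φ a - μ)) = 0 := by
    rw [expect_neg_distrib, ← mul_expect, expect_sub_distrib, Fintype.expect_const]; simp [hμ]
  calc 𝔼 a, Real.exp (-(l * φ a))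
      = 𝔼 a, Real.exp (-(l * (φ a - μ))) * Real.exp (-(l * μ)) :=
        expect_congr rfl fun a _ => by rw [← Real.exp_add]; congr 1; ring
    _ ≤ Real.exp (𝔼 a, (-(l * (φ a - μ))) ^ 2) * Real.exp (-(l * μ)) := by
        rw [← expect_mul]
        gcongr
        exact expect_exp_le_of_expect_eq_zero hsmall hcentred
    _ ≤ Real.exp (4 * l ^ 2 * 𝔼 a, c a ^ 2 - l * μ) := by
        rw [← Real.exp_add, sub_eq_add_neg]
        gcongr
        calc 𝔼 a, (-(l * (φ a - μ))) ^ 2 = l ^ 2 * 𝔼 a, (φ a - μ) ^ 2 := by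
              rw [mul_expect]; exact expect_congr rfl fun a _ => by ring
          _ ≤ l ^ 2 * (4 * 𝔼 a, c a ^ 2) := by gcongr; exact expect_sq_sub_expect_le h
          _ = 4 * l ^ 2 * 𝔼 a, c a ^ 2 := by ring

end OneVariable

variable {ι κ : Type*} [DecidableEq ι] [LinearOrder κ] {Ω : ι → Type*}
  [∀ i, Fintype (Ω i)] [∀ i, Nonempty (Ω i)] {f : (∀ i, Ω i) → ℝ} {S : Finset ι}
  {c : ∀ i, (∀ i, Ω i) → Ω i → ℝ} {s : ι → ℝ} {l B : ℝ}

theorem abs_avgAt_update_sub_le {i j : ι} (hji : j ≠ i)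
    (hc : ∀ a, DependsOn (fun ω => c j ω a) {i}ᶜ)
    (hf : ∀ ω a b, |f (update ω j a) - f (update ω j b)| ≤ c j ω a + c j ω b)
    (ω : ∀ i, Ω i) (a b : Ω j) :
    |avgAt i f (update ω j a) - avgAt i f (update ω j b)| ≤ c j ω a + c j ω b := by
  simp only [avgAt, ← expect_sub_distrib]
  refine (abs_expect_le _ _).trans (expect_le univ_nonempty fun x _ => ?_)
  have hcx : ∀ a, c j (update ω i x) a = c j ω a := fun a =>
    apply_update_of_dependsOn (hc a) (by simp) ω x
  simpa only [update_comm hji, hcx] using hf (update ω i x) a b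

variable [Fintype ι]

-- Bounded differences as a supermartingale argument: the coordinates are averaged out in order of
-- decreasing `ρ`, and the cost `c i` may depend on what is exposed before `i`.
theorem expect_exp_neg_mul_le_of_exposure (ρ : ι → κ)
    (hc : ∀ i a, DependsOn (fun ω => c i ω a) {j | ρ j < ρ i}) (hcB : ∀ i ω a, c i ω a ≤ B)
    (hs : ∀ i ω, 𝔼 a, c i ω a ^ 2 ≤ s i) (hl : 0 ≤ l) (hlB : 2 * l * B ≤ 1)
    (hf : DependsOn f S)
    (hfc : ∀ i ∈ S, ∀ ω a b, |f (update ω i a) - f (update ω i b)| ≤ c i ω a + c i ω b) :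
    𝔼 ω, Real.exp (-(l * f ω)) ≤ Real.exp (4 * l ^ 2 * ∑ i ∈ S, s i - l * 𝔼 ω, f ω) := by
  induction S using Finset.induction_on_max_value ρ generalizing f with
  | empty =>
    have hconst (ω : ∀ i, Ω i) : f ω = 𝔼 ω', f ω' := by
      rw [expect_congr rfl fun ω' _ => (by simpa using hf : DependsOn f ∅).empty ω' ω,
        Fintype.expect_const]
    exact expect_le univ_nonempty fun ω _ => by rw [hconst ω]; simp
  | insert i S hi hmax ih =>
    have hstep (ω : ∀ i, Ω i) : avgAt i (fun ω => Real.exp (-(l * f ω))) ω ≤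
        Real.exp (4 * l ^ 2 * s i) * Real.exp (-(l * avgAt i f ω)) := by
      rw [← Real.exp_add, ← sub_eq_add_neg]
      refine (expect_exp_neg_mul_le (hfc i (mem_insert_self i S) ω) (hcB i ω) hl hlB).trans ?_
      gcongr
      exacts [hs i ω, le_rfl]
    have havg : 𝔼 ω, Real.exp (-(l * avgAt i f ω)) ≤
        Real.exp (4 * l ^ 2 * ∑ i ∈ S, s i - l * 𝔼 ω, f ω) := by
      rw [← expect_avgAt i f]
      refine ih (dependsOn_avgAt (by simpa using hf)) fun j hj => ?_
      refine abs_avgAt_update_sub_le (ne_of_mem_of_not_mem hj hi) (fun a => (hc j a).mono ?_)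
        (hfc j (mem_insert_of_mem hj))
      rintro k (hk : ρ k < ρ j) rfl
      exact (hmax j hj).not_gt hk
    calc 𝔼 ω, Real.exp (-(l * f ω))
        = 𝔼 ω, avgAt i (fun ω => Real.exp (-(l * f ω))) ω := (expect_avgAt i _).symm
      _ ≤ Real.exp (4 * l ^ 2 * s i) * 𝔼 ω, Real.exp (-(l * avgAt i f ω)) := by
          rw [mul_expect]; exact expect_le_expect fun ω _ => hstep ω
      _ ≤ Real.exp (4 * l ^ 2 * s i) * Real.exp (4 * l ^ 2 * ∑ i ∈ S, s i - l * 𝔼 ω, f ω) := by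
          gcongr
      _ = Real.exp (4 * l ^ 2 * ∑ i ∈ insert i S, s i - l * 𝔼 ω, f ω) := by
          rw [← Real.exp_add, sum_insert hi]; congr 1; ring

theorem prob_lt_le (ρ : ι → κ)
    (hc : ∀ i a, DependsOn (fun ω => c i ω a) {j | ρ j < ρ i}) (hcB : ∀ i ω a, c i ω a ≤ B)
    (hs : ∀ i ω, 𝔼 a, c i ω a ^ 2 ≤ s i) (hl : 0 ≤ l) (hlB : 2 * l * B ≤ 1)
    (hfc : ∀ i ω a b, |f (update ω i a) - f (update ω i b)| ≤ c i ω a + c i ω b) (t : ℝ) :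
    prob {ω | f ω < t} ≤ Real.exp (4 * l ^ 2 * ∑ i, s i + l * (t - 𝔼 ω, f ω)) := by
  calc prob {ω | f ω < t}
      ≤ 𝔼 ω, Real.exp (l * t) * Real.exp (-(l * f ω)) := expect_le_expect fun ω _ => by
        rw [← Real.exp_add]
        refine Set.indicator_apply_le' (fun (hω : f ω < t) => ?_) fun _ => by positivity
        rw [Pi.one_apply, Real.one_le_exp_iff, ← sub_eq_add_neg, ← mul_sub]
        exact mul_nonneg hl (sub_nonneg.2 hω.le)
    _ ≤ Real.exp (l * t) * Real.exp (4 * l ^ 2 * ∑ i, s i - l * 𝔼 ω, f ω) := by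
        rw [← mul_expect]
        gcongr
        exact expect_exp_neg_mul_le_of_exposure ρ hc hcB hs hl hlB
          (by simpa using dependsOn_univ f) fun i _ => hfc i
    _ = _ := by rw [← Real.exp_add]; congr 1; ring

end Concentration

section LocalLemma

variable {ι β : Type*} {Ω : ι → Type*} {bad : β → Set (∀ i, Ω i)} {T : β → Finset ι}

/-- The event that none of the events `bad v`, `v ∈ S`, occurs. -/
def avoid (bad : β → Set (∀ i, Ω i)) (S : Finset β) : Set (∀ i, Ω i) :=
  {ω | ∀ v ∈ S, ω ∉ bad v}

theorem avoid_anti {S S' : Finset β} (h : S' ⊆ S) : avoid bad S ⊆ avoid bad S' :=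
  fun _ hω v hv => hω v (h hv)

theorem avoid_subset_avoid_union {S S' : Finset β} [DecidableEq β] :
    avoid bad S' ⊆ avoid bad S ∪ ⋃ w ∈ S \ S', avoid bad S' ∩ bad w := fun ω hω => by
  by_cases hS : ω ∈ avoid bad S
  · exact Or.inl hS
  · obtain ⟨w, hw, hbad⟩ : ∃ w ∈ S, ω ∈ bad w := by simpa [avoid] using hS
    have hw' : w ∈ S \ S' := mem_sdiff.2 ⟨hw, fun h => hω w h hbad⟩
    exact Or.inr (Set.mem_biUnion hw' ⟨hω, hbad⟩)

theorem dependsOn_mem_avoid (hdep : ∀ v, DependsOn (· ∈ bad v) (T v)) (S : Finset β) :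
    DependsOn (· ∈ avoid bad S) (⋃ v ∈ S, ↑(T v)) := fun ω ω' h => by
  refine propext (forall₂_congr fun v hv => not_congr (iff_of_eq (hdep v fun i hi => h i ?_)))
  exact Set.mem_biUnion hv hi

variable [Fintype ι] [DecidableEq ι] [∀ i, Fintype (Ω i)] [∀ i, Nonempty (Ω i)] [Fintype β]
  [DecidableEq β] {p : ℝ} {d : ℕ}

theorem prob_avoid_inter_le (hdep : ∀ v, DependsOn (· ∈ bad v) (T v)) (hp : ∀ v, prob (bad v) ≤ p)
    (hd : ∀ v, #{w | w ≠ v ∧ ¬Disjoint (T v) (T w)} ≤ d) (hpd : 4 * p * (d + 1) ≤ 1)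
    (S : Finset β) (v : β) :
    prob (avoid bad S ∩ bad v) ≤ 2 * p * prob (avoid bad S) := by
  have hp0 : 0 ≤ p := (prob_nonneg _).trans (hp v)
  induction S using Finset.strongInduction generalizing v with
  | H S ih =>
  by_cases hvS : v ∈ S
  · have hempty : avoid bad S ∩ bad v = ∅ :=
      Set.eq_empty_of_forall_notMem fun ω hω => hω.1 v hvS hω.2
    rw [hempty, prob_empty]
    exact mul_nonneg (by positivity) (prob_nonneg _)
  set far := {w ∈ S | Disjoint (T v) (T w)} with hfar
  have hnear : S \ far ⊆ ({w | w ≠ v ∧ ¬Disjoint (T v) (T w)} : Finset β) := fun w hw => by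
    simp only [hfar, mem_sdiff, mem_filter, not_and] at hw
    simpa [hw.2 hw.1] using ne_of_mem_of_not_mem hw.1 hvS
  have hindep : prob (avoid bad far ∩ bad v) = prob (avoid bad far) * prob (bad v) := by
    refine prob_inter_of_dependsOn (dependsOn_mem_avoid hdep far) ((hdep v).mono ?_)
    simp [Set.subset_compl_iff_disjoint_right, hfar]
  have hsum : ∑ w ∈ S \ far, prob (avoid bad far ∩ bad w) ≤
      d * (2 * p * prob (avoid bad far)) := by
    have hpos : 0 ≤ 2 * p * prob (avoid bad far) := mul_nonneg (by positivity) (prob_nonneg _)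
    calc _ ≤ ∑ w ∈ S \ far, 2 * p * prob (avoid bad far) := sum_le_sum fun w hw =>
          ih far (filter_ssubset.2 ⟨w, (mem_sdiff.1 hw).1, (mem_filter.1 (hnear hw)).2.2⟩) w
      _ ≤ _ := by
          rw [sum_const, nsmul_eq_mul]
          gcongr
          exact (card_le_card hnear).trans (hd v)
  have hhalf : prob (avoid bad far) ≤ 2 * prob (avoid bad S) := by
    have h := prob_le_add_sum (avoid_subset_avoid_union (bad := bad) (S := S) (S' := far))
    nlinarith [prob_nonneg (avoid bad far)]
  calc prob (avoid bad S ∩ bad v) ≤ prob (avoid bad far ∩ bad v) :=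
        prob_mono (Set.inter_subset_inter_left _ (avoid_anti (filter_subset _ S)))
    _ ≤ 2 * prob (avoid bad S) * p :=
        hindep.trans_le (mul_le_mul hhalf (hp v) (prob_nonneg _)
          (mul_nonneg zero_le_two (prob_nonneg _)))
    _ = 2 * p * prob (avoid bad S) := by ring

/-- The symmetric Lovász local lemma. -/
theorem exists_forall_notMem_of_prob_le (hdep : ∀ v, DependsOn (· ∈ bad v) (T v))
    (hp : ∀ v, prob (bad v) ≤ p) (hd : ∀ v, #{w | w ≠ v ∧ ¬Disjoint (T v) (T w)} ≤ d)
    (hpd : 4 * p * (d + 1) ≤ 1) : ∃ ω, ∀ v, ω ∉ bad v := by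
  have hpos (S : Finset β) : 0 < prob (avoid bad S) := by
    induction S using Finset.induction_on with
    | empty => simp [avoid, prob_univ]
    | insert v S hv ih =>
      have hp0 : 0 ≤ p := (prob_nonneg _).trans (hp v)
      have hcover : prob (avoid bad S) ≤ prob (avoid bad (insert v S)) +
          ∑ w ∈ insert v S \ S, prob (avoid bad S ∩ bad w) :=
        prob_le_add_sum avoid_subset_avoid_union
      rw [insert_sdiff_cancel hv, sum_singleton] at hcover
      have hbad := prob_avoid_inter_le hdep hp hd hpd S v
      nlinarith [mul_nonneg hp0 d.cast_nonneg]
  by_contra! h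
  have hempty : avoid bad univ = ∅ := Set.eq_empty_of_forall_notMem fun ω hω =>
    let ⟨v, hv⟩ := h ω
    hω v (mem_univ v) hv
  simpa [hempty, prob_empty] using hpos univ

end LocalLemma

section Greedy

variable {V C : Type*} {G : SimpleGraph V} {p : V → Option C}

/-- A partial proper colouring of `G`, `none` standing for "not coloured". -/
def IsPartialColoring (G : SimpleGraph V) (p : V → Option C) : Prop :=
  ∀ ⦃u w c⦄, G.Adj u w → p u = some c → p w ≠ some c

theorem IsPartialColoring.update [DecidableEq V] (hp : IsPartialColoring G p) {v : V} {c : C}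
    (hc : ∀ u, G.Adj v u → p u ≠ some c) : IsPartialColoring G (update p v (some c)) := by
  intro u w c' huw hu hw
  rcases eq_or_ne u v with rfl | huv
  · rw [update_of_ne huw.ne'] at hw
    rw [update_self] at hu
    exact hc w huw (hw.trans hu.symm)
  · rw [update_of_ne huv] at hu
    rcases eq_or_ne w v with rfl | hwv
    · rw [update_self] at hw
      exact hc u huw.symm (hu.trans hw.symm)
    · rw [update_of_ne hwv] at hw
      exact hp huw hu hw

variable [Fintype V] [DecidableRel G.Adj] [Fintype C] [DecidableEq C]

theorem exists_forall_adj_ne_some {v : V}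
    (hv : G.degree v < Fintype.card C + ∑ c, (#{u ∈ G.neighborFinset v | p u = some c} - 1)) :
    ∃ c, ∀ u, G.Adj v u → p u ≠ some c := by
  classical
  by_contra! h
  have hpos (c : C) : 1 ≤ #{u ∈ G.neighborFinset v | p u = some c} :=
    let ⟨u, hvu, hu⟩ := h c
    card_pos.2 ⟨u, by simp [hvu, hu]⟩
  have hsum : ∑ c, #{u ∈ G.neighborFinset v | p u = some c} ≤ G.degree v := by
    rw [← G.card_neighborFinset_eq_degree, ← card_biUnion]
    · exact card_le_card (biUnion_subset.2 fun c _ => filter_subset _ _)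
    · intro c _ c' _ hcc'
      refine disjoint_filter.2 fun u _ hu hu' => hcc' (Option.some_injective _ (hu ▸ hu'))
  have hsub : ∑ c, (#{u ∈ G.neighborFinset v | p u = some c} - 1) + Fintype.card C =
      ∑ c, #{u ∈ G.neighborFinset v | p u = some c} := by
    rw [← card_univ, card_eq_sum_ones, ← sum_add_distrib]
    exact sum_congr rfl fun c _ => Nat.sub_add_cancel (hpos c)
  omega

/-- Greedy completion: colours repeated in a neighbourhood leave room to colour its centre. -/
theorem colorable_of_degree_lt (hp : IsPartialColoring G p)
    (hdeg : ∀ v, G.degree v <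
      Fintype.card C + ∑ c, (#{u ∈ G.neighborFinset v | p u = some c} - 1)) :
    G.Colorable (Fintype.card C) := by
  classical
  induction hn : #{v | p v = none} using Nat.strong_induction_on generalizing p with
  | _ n ih =>
  by_cases hall : ∀ v, ∃ c, p v = some c
  · choose col hcol using hall
    exact (SimpleGraph.Coloring.mk col fun {u w} huw heq =>
      hp huw (hcol u) ((hcol w).trans (congrArg some heq.symm))).colorable
  obtain ⟨v, hv⟩ : ∃ v, p v = none := by
    simpa only [not_forall, ← Option.ne_none_iff_exists', not_ne_iff] using hall
  obtain ⟨c, hc⟩ := exists_forall_adj_ne_some (hdeg v)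
  have hext {u : V} {c' : C} (hu : p u = some c') : update p v (some c) u = some c' := by
    rwa [update_of_ne]
    rintro rfl
    simp [hv] at hu
  refine ih _ ?_ (hp.update hc) (fun w => (hdeg w).trans_le ?_) rfl
  · rw [← hn]
    refine card_lt_card (ssubset_iff_of_subset (monotone_filter_right _ fun u _ hu => ?_) |>.2
      ⟨v, by simp [hv], by simp⟩)
    rcases eq_or_ne u v with rfl | huv
    · exact hv
    · rwa [update_of_ne huv] at hu
  · refine Nat.add_le_add_left (sum_le_sum fun c' _ => Nat.sub_le_sub_right ?_ 1) _
    exact card_le_card (monotone_filter_right _ fun u _ hu => hext hu)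

end Greedy

section Neighborhoods

variable {V : Type*} [Fintype V] [DecidableEq V] {G : SimpleGraph V} [DecidableRel G.Adj] {r : ℕ}

/-- The vertices at distance one or two from `v`, and `v` itself unless it is isolated: those whose
draws affect which neighbours of `v` keep their colours. -/
def withinTwo (G : SimpleGraph V) [DecidableRel G.Adj] (v : V) : Finset V :=
  G.neighborFinset v ∪ (G.neighborFinset v).biUnion fun u => G.neighborFinset u

theorem mem_withinTwo_comm {v x : V} : x ∈ withinTwo G v ↔ v ∈ withinTwo G x := by
  simp only [withinTwo, mem_union, mem_biUnion, SimpleGraph.mem_neighborFinset, G.adj_comm v x]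
  exact or_congr_right (exists_congr fun u => by rw [and_comm, G.adj_comm v, G.adj_comm u])

theorem card_withinTwo_le (hdeg : ∀ v, G.degree v ≤ r) (v : V) :
    #(withinTwo G v) ≤ r + r ^ 2 := by
  refine (card_union_le _ _).trans (add_le_add (hdeg v) ?_)
  rw [sq]
  exact (card_biUnion_le_card_mul _ _ r fun u _ => hdeg u).trans (Nat.mul_le_mul_right r (hdeg v))

theorem card_not_disjoint_withinTwo_le (hdeg : ∀ v, G.degree v ≤ r) (v : V) :
    #{w | ¬Disjoint (withinTwo G v) (withinTwo G w)} ≤ (r + r ^ 2) ^ 2 := by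
  have hsub : ({w | ¬Disjoint (withinTwo G v) (withinTwo G w)} : Finset V) ⊆
      (withinTwo G v).biUnion (withinTwo G) := fun w hw => by
    obtain ⟨x, hxv, hxw⟩ := not_disjoint_iff.1 (mem_filter.1 hw).2
    exact mem_biUnion.2 ⟨x, hxv, mem_withinTwo_comm.1 hxw⟩
  refine (card_le_card hsub).trans
    ((card_biUnion_le_card_mul _ _ _ fun u _ => card_withinTwo_le hdeg u).trans ?_)
  rw [sq (r + r ^ 2)]
  exact Nat.mul_le_mul_right _ (card_withinTwo_le hdeg v)

theorem sum_card_inter_neighborFinset_le (hdeg : ∀ v, G.degree v ≤ r)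
    (v : V) : ∑ x, #(G.neighborFinset v ∩ G.neighborFinset x) ≤ r ^ 2 := by
  calc ∑ x, #(G.neighborFinset v ∩ G.neighborFinset x)
      = ∑ x, #{u ∈ G.neighborFinset v | G.Adj u x} := sum_congr rfl fun x _ => by
        congr 1
        ext u
        simp [G.adj_comm x]
    _ = ∑ u ∈ G.neighborFinset v, #{x | G.Adj u x} :=
        (sum_card_bipartiteAbove_eq_sum_card_bipartiteBelow G.Adj).symm
    _ ≤ ∑ _u ∈ G.neighborFinset v, r := sum_le_sum fun u _ => by
        rw [← G.neighborFinset_eq_filter]; exact hdeg u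
    _ ≤ r ^ 2 := by
        rw [sum_const, smul_eq_mul, sq]
        exact Nat.mul_le_mul_right r (hdeg v)

theorem sum_compl_card_filter_adj {S : Finset V} (hS : G.IsIndepSet (S : Set V)) :
    ∑ x ∈ Sᶜ, #{u ∈ S | G.Adj x u} = ∑ u ∈ S, G.degree u := by
  calc ∑ x ∈ Sᶜ, #{u ∈ S | G.Adj x u} = ∑ x, #{u ∈ S | G.Adj x u} :=
        sum_subset (subset_univ _) fun x _ hx => by
          rw [card_eq_zero, filter_eq_empty_iff]
          exact fun u hu hxu => hS (by simpa using hx) hu hxu.ne hxu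
    _ = ∑ u ∈ S, #{x | G.Adj x u} := sum_card_bipartiteAbove_eq_sum_card_bipartiteBelow G.Adj
    _ = ∑ u ∈ S, G.degree u := sum_congr rfl fun u _ => by
        simp only [G.adj_comm _ u, ← G.neighborFinset_eq_filter, G.card_neighborFinset_eq_degree]

end Neighborhoods

section Cost

variable {V C : Type*} {G : SimpleGraph V}

/-- The random choices of a vertex: a tentative colour, and one bit for each possible opponent in a
conflict. -/
abbrev Draw (V C : Type*) : Type _ :=
  C × (V → Bool)

/-- The draw of `x` can influence which neighbours of `v` keep the colour `c`. -/
def Influences (G : SimpleGraph V) (ω : V → Draw V C) (v x : V) (c : C) : Prop :=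
  G.Adj v x ∨ ∃ u, G.Adj v u ∧ G.Adj x u ∧ (ω u).1 = c

open Classical in
/-- A bound for the effect on `savings G ω v` of the value `a` of the draw of `x`. -/
noncomputable def cost (G : SimpleGraph V) (v x : V) (ω : V → Draw V C) (a : Draw V C) : ℝ :=
  if Influences G ω v x a.1 then 2 else 0

theorem cost_le_two (v x : V) (ω : V → Draw V C) (a : Draw V C) : cost G v x ω a ≤ 2 := by
  unfold cost
  split_ifs <;> norm_num

variable [DecidableRel G.Adj]

theorem dependsOn_cost (v x : V) (a : Draw V C) :
    DependsOn (fun ω : V → Draw V C => cost G v x ω a)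
      {j | (if G.Adj v j then 0 else 1) < (if G.Adj v x then 0 else 1)} := fun ω ω' h => by
  by_cases hx : G.Adj v x
  · simp [cost, Influences, hx]
  · have hiff : Influences G ω v x a.1 ↔ Influences G ω' v x a.1 :=
      or_congr_right <| exists_congr fun u => and_congr_right fun hu => by
        have hωu : ω u = ω' u := h u (by simp [hu, hx])
        rw [hωu]
    classical exact if_congr hiff rfl rfl

variable [Fintype V] [DecidableEq V] [Fintype C]

theorem expect_cost_sq_le [Nonempty C] (v x : V) (ω : V → Draw V C) :
    𝔼 a, cost G v x ω a ^ 2 ≤ 4 * (if G.Adj v x then 1 else 0) +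
      4 / Fintype.card C * #(G.neighborFinset v ∩ G.neighborFinset x) := by
  classical
  by_cases hx : G.Adj v x
  · rw [if_pos hx]
    refine (expect_le univ_nonempty fun a _ => ?_).trans (le_add_of_nonneg_right (by positivity))
    simp only [cost, Influences, hx, true_or, if_true]
    norm_num
  have himage : ({c | Influences G ω v x c} : Finset C) ⊆
      (G.neighborFinset v ∩ G.neighborFinset x).image fun u => (ω u).1 := fun c hc => by
    obtain ⟨u, hvu, hxu, rfl⟩ := (mem_filter.1 hc).2.resolve_left hx
    exact mem_image_of_mem _ (by simp [hvu, hxu])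
  calc 𝔼 a, cost G v x ω a ^ 2 = 𝔼 c, 4 * if Influences G ω v x c then (1 : ℝ) else 0 := by
        rw [← univ_product_univ, expect_product]
        refine expect_congr rfl fun c _ => ?_
        simp only [cost]
        split_ifs <;> norm_num
    _ = 4 / Fintype.card C * #{c | Influences G ω v x c} := by
        rw [← mul_expect, Fintype.expect_eq_sum_div_card, sum_boole]
        ring
    _ ≤ _ := by
        rw [if_neg hx, mul_zero, zero_add]
        gcongr
        exact (card_le_card himage).trans card_image_le

end Cost

section RandomDraw

variable {V C : Type*} [LinearOrder V] {G : SimpleGraph V}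

/-- The fair coin deciding a conflict between `x` and `u` in favour of `x`. It combines one bit of
each contestant, so that it stays fair once either of them is fixed, and the order makes it
antisymmetric. -/
def beats (ω : V → Draw V C) (x u : V) : Bool :=
  decide (x < u) ^^ (ω x).2 u ^^ (ω u).2 x

/-- `x` makes its neighbour `u` lose the tentative colour which both of them received. -/
def Kills (G : SimpleGraph V) (ω : V → Draw V C) (x u : V) : Prop :=
  G.Adj x u ∧ (ω x).1 = (ω u).1 ∧ beats ω x u

/-- `u` keeps its tentative colour. -/
def Retained (G : SimpleGraph V) (ω : V → Draw V C) (u : V) : Prop :=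
  ∀ x, ¬Kills G ω x u

theorem beats_or_beats {x u : V} (h : x ≠ u) (ω : V → Draw V C) :
    beats ω x u ∨ beats ω u x := by
  simp only [beats]
  rcases h.lt_or_gt with h | h <;> simp only [h, h.not_gt, decide_true, decide_false] <;>
    cases (ω x).2 u <;> cases (ω u).2 x <;> simp

theorem Retained.color_ne {ω : V → Draw V C} {u w : V} (hu : Retained G ω u)
    (hw : Retained G ω w) (huw : G.Adj u w) : (ω u).1 ≠ (ω w).1 := fun h =>
  (beats_or_beats huw.ne ω).elim (fun hb => hw u ⟨huw, h, hb⟩) fun hb => hu w ⟨huw.symm, h.symm, hb⟩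

theorem dependsOn_kills (G : SimpleGraph V) (x u : V) :
    DependsOn (fun ω : V → Draw V C => Kills G ω x u) {x, u} := fun ω ω' h => by
  simp only [Kills, beats, h x (by simp), h u (by simp)]

theorem kills_update {x y u : V} (hy : y ≠ x) (hu : u ≠ x) (ω : V → Draw V C) (a : Draw V C) :
    Kills G (update ω x a) y u ↔ Kills G ω y u :=
  iff_of_eq (apply_update_of_dependsOn (dependsOn_kills G y u) (by simp [hy.symm, hu.symm]) ω a)

variable [Fintype V] [DecidableRel G.Adj] [DecidableEq C]

instance (ω : V → Draw V C) (x u : V) : Decidable (Kills G ω x u) :=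
  inferInstanceAs (Decidable (_ ∧ _ ∧ _))

instance (ω : V → Draw V C) : DecidablePred (Retained G ω) := fun u =>
  inferInstanceAs (Decidable (∀ x, ¬Kills G ω x u))

variable (G) in
/-- The neighbours of `v` that keep the colour `c`. -/
def keepers (ω : V → Draw V C) (v : V) (c : C) : Finset V :=
  {u ∈ G.neighborFinset v | (ω u).1 = c ∧ Retained G ω u}

theorem keepers_update_subset {ω : V → Draw V C} {v x : V} {a b : Draw V C} {c : C}
    (ha : Influences G ω v x c → a.1 ≠ c) (hb : Influences G ω v x c → b.1 ≠ c) :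
    keepers G (update ω x a) v c ⊆ keepers G (update ω x b) v c := fun u hu => by
  obtain ⟨hvu, hc, hret⟩ : G.Adj v u ∧ (update ω x a u).1 = c ∧ Retained G (update ω x a) u := by
    simpa [keepers] using hu
  have hux : u ≠ x := by
    rintro rfl
    exact ha (Or.inl hvu) (by simpa using hc)
  rw [update_of_ne hux] at hc
  have hret' : Retained G (update ω x b) u := fun y hy => by
    rcases eq_or_ne y x with rfl | hyx
    · refine hb (Or.inr ⟨u, hvu, hy.1, hc⟩) ?_
      simpa [update_of_ne hux, hc] using hy.2.1
    · exact hret y ((kills_update hyx hux ω a).2 ((kills_update hyx hux ω b).1 hy))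
  simp [keepers, hvu, update_of_ne hux, hc, hret']

theorem keepers_update_eq {ω : V → Draw V C} {v x : V} {a b : Draw V C} {c : C}
    (ha : Influences G ω v x c → a.1 ≠ c) (hb : Influences G ω v x c → b.1 ≠ c) :
    keepers G (update ω x a) v c = keepers G (update ω x b) v c :=
  (keepers_update_subset ha hb).antisymm (keepers_update_subset hb ha)

variable [Fintype C]

variable (G) in
/-- The number of colours saved at `v` by repetitions among its neighbours, where a colour may save
at most two: the truncation keeps the dependence on every single draw bounded. -/
def savings (ω : V → Draw V C) (v : V) : ℕ :=
  ∑ c, min (#(keepers G ω v c) - 1) 2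

theorem colorable_of_degree_lt_add_savings (ω : V → Draw V C)
    (h : ∀ v, G.degree v < Fintype.card C + savings G ω v) : G.Colorable (Fintype.card C) := by
  let p (u : V) : Option C := if Retained G ω u then some (ω u).1 else none
  have hp (u : V) (c : C) : p u = some c ↔ (ω u).1 = c ∧ Retained G ω u := by
    simp only [p]
    split_ifs with hu <;> simp [hu]
  refine colorable_of_degree_lt (p := p) (fun u w c huw hu hw => ?_)
    fun v => (h v).trans_le (Nat.add_le_add_left (sum_le_sum fun c _ => ?_) _)
  · rw [hp] at hu hw
    exact hu.2.color_ne hw.2 huw (hu.1.trans hw.1.symm)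
  · simp only [keepers, hp]
    exact min_le_left _ _

theorem dependsOn_savings (v : V) :
    DependsOn (fun ω : V → Draw V C => savings G ω v) (withinTwo G v) := fun ω ω' h => by
  simp only [savings, keepers]
  refine sum_congr rfl fun c _ => ?_
  congr 3
  refine filter_congr fun u hu => ?_
  have hωu : ω u = ω' u := h u (mem_union_left _ hu)
  rw [hωu]
  refine and_congr_right fun _ => forall_congr' fun x => ?_
  by_cases hxu : G.Adj x u
  · refine not_congr (iff_of_eq (dependsOn_kills G x u ?_))
    rintro y (rfl | rfl)
    · exact h y (mem_union_right _ (mem_biUnion.2 ⟨u, hu, by simpa using hxu.symm⟩))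
    · exact h y (mem_union_left _ hu)
  · simp [Kills, hxu]

theorem abs_min_two_sub_min_two_le (m n : ℕ) : |((min m 2 : ℕ) : ℝ) - (min n 2 : ℕ)| ≤ 2 := by
  have h (n : ℕ) : ((min n 2 : ℕ) : ℝ) ∈ Set.Icc 0 2 :=
    ⟨Nat.cast_nonneg _, mod_cast min_le_right n 2⟩
  simpa using abs_sub_le_of_le_of_le (h m).1 (h m).2 (h n).1 (h n).2

open Classical in
theorem abs_savings_update_sub_le (v x : V) (ω : V → Draw V C) (a b : Draw V C) :
    |(savings G (update ω x a) v : ℝ) - savings G (update ω x b) v| ≤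
      cost G v x ω a + cost G v x ω b := by
  have hcost (a : Draw V C) : cost G v x ω a =
      ∑ c, if Influences G ω v x c ∧ a.1 = c then (2 : ℝ) else 0 := by
    simp only [and_comm, ite_and, sum_ite_eq, mem_univ, if_true, cost]
  simp only [savings, Nat.cast_sum, hcost, ← sum_sub_distrib, ← sum_add_distrib]
  refine (abs_sum_le_sum_abs _ _).trans (sum_le_sum fun c _ => ?_)
  have h2 := abs_min_two_sub_min_two_le (#(keepers G (update ω x a) v c) - 1)
    (#(keepers G (update ω x b) v c) - 1)
  by_cases ha : Influences G ω v x c ∧ a.1 = c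
  · rw [if_pos ha]
    split_ifs <;> linarith
  by_cases hb : Influences G ω v x c ∧ b.1 = c
  · rw [if_pos hb, if_neg ha]
    linarith
  rw [keepers_update_eq (not_and.1 ha) (not_and.1 hb)]
  simp [ha, hb]

theorem prob_savings_lt_le [Nonempty C] {r : ℕ} (hdeg : ∀ v, G.degree v ≤ r) {l : ℝ} (hl : 0 ≤ l)
    (hl' : l ≤ 1 / 4) (v : V) (t : ℝ) :
    prob {ω : V → Draw V C | (savings G ω v : ℝ) < t} ≤
      Real.exp (4 * l ^ 2 * (4 * r + 4 * r ^ 2 / Fintype.card C) +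
        l * (t - 𝔼 ω : V → Draw V C, (savings G ω v : ℝ))) := by
  refine (prob_lt_le (fun j => if G.Adj v j then 0 else 1) (dependsOn_cost v) (cost_le_two v)
    (expect_cost_sq_le v) hl (by linarith) (abs_savings_update_sub_le v) t).trans ?_
  gcongr
  calc _ = (4 * G.degree v +
        4 / Fintype.card C * ∑ x, #(G.neighborFinset v ∩ G.neighborFinset x) : ℝ) := by
        rw [sum_add_distrib, ← mul_sum, ← mul_sum, sum_boole, ← G.neighborFinset_eq_filter,
          G.card_neighborFinset_eq_degree, Nat.cast_sum]
    _ ≤ 4 * r + 4 / Fintype.card C * r ^ 2 := by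
        gcongr
        · exact hdeg v
        · exact_mod_cast sum_card_inter_neighborFinset_le hdeg v
    _ = _ := by ring

theorem colorable_of_le_expect_savings [Nonempty C] {r : ℕ} (hdeg : ∀ v, G.degree v ≤ r) {l m : ℝ}
    (hl : 0 ≤ l) (hl' : l ≤ 1 / 4) (hm : ∀ v, m ≤ 𝔼 ω : V → Draw V C, (savings G ω v : ℝ))
    (hlm : 4 * Real.exp (4 * l ^ 2 * (4 * r + 4 * r ^ 2 / Fintype.card C) +
      l * (r + 1 - Fintype.card C - m)) * ((r + r ^ 2) ^ 2 + 1) ≤ 1) :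
    G.Colorable (Fintype.card C) := by
  obtain ⟨ω, hω⟩ := exists_forall_notMem_of_prob_le
    (bad := fun v => {ω : V → Draw V C | (savings G ω v : ℝ) < r + 1 - Fintype.card C})
    (T := withinTwo G) (d := (r + r ^ 2) ^ 2)
    (fun v ω ω' h => by simp only [Set.mem_ofPred_eq, dependsOn_savings v h])
    (fun v => (prob_savings_lt_le hdeg hl hl' v _).trans <| Real.exp_le_exp.2 <|
      add_le_add_right (mul_le_mul_of_nonneg_left (sub_le_sub_left (hm v) _) hl) _)
    (fun v => (card_le_card (monotone_filter_right _ fun w _ hw => hw.2)).trans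
      (card_not_disjoint_withinTwo_le hdeg v))
    (by exact_mod_cast hlm)
  refine colorable_of_degree_lt_add_savings ω fun v => ?_
  have hv : (r + 1 - Fintype.card C : ℝ) ≤ savings G ω v := not_lt.1 (hω v)
  have hv' : (r : ℝ) + 1 ≤ (Fintype.card C + savings G ω v : ℕ) := by push_cast; linarith
  exact (hdeg v).trans_lt (by exact_mod_cast hv')

end RandomDraw

section Mean

variable {V C : Type*} [LinearOrder V] [Fintype V] {G : SimpleGraph V} [DecidableRel G.Adj]
  [DecidableEq C]

theorem isIndepSet_of_subset_keepers {S : Finset V} {v : V} {c : C} {ω : V → Draw V C}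
    (h : S ⊆ keepers G ω v c) : G.IsIndepSet (S : Set V) := fun _ hu _ hw _ huw =>
  have hu' := (mem_filter.1 (h hu)).2
  have hw' := (mem_filter.1 (h hw)).2
  hu'.2.color_ne hw'.2 huw (hu'.1.trans hw'.1.symm)

variable [Fintype C]

/-- The probability that a vertex makes none of its neighbours in `S` lose the colour `c`, when it
has `j` such neighbours, each vertex of `S` having received `c` out of `k` colours. -/
noncomputable def sparingProb (k j : ℕ) : ℝ :=
  1 - (1 - (1 / 2) ^ j) / k

theorem avgAt_boole_forall_not_kills [Nonempty C] {S : Finset V} {x : V} (hx : x ∉ S) {c : C}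
    {ω : V → Draw V C} (hω : ∀ u ∈ S, (ω u).1 = c) :
    avgAt x (fun ω => if ∀ u ∈ S, ¬Kills G ω x u then 1 else 0) ω =
      sparingProb (Fintype.card C) #{u ∈ S | G.Adj x u} := by
  have hspare (i : C) (b : V → Bool) : (∀ u ∈ S, ¬Kills G (update ω x (i, b)) x u) ↔
      (i = c → ∀ u ∈ ({u ∈ S | G.Adj x u} : Finset V), b u = (decide (x < u) ^^ (ω u).2 x)) := by
    have hkills (u : V) (hu : u ∈ S) : Kills G (update ω x (i, b)) x u ↔
        G.Adj x u ∧ i = c ∧ b u ≠ (decide (x < u) ^^ (ω u).2 x) := by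
      have hux : u ≠ x := ne_of_mem_of_not_mem hu hx
      simp only [Kills, beats, update_self, update_of_ne hux, hω u hu]
      cases b u <;> cases (ω u).2 x <;> simp
    simp +contextual only [hkills]
    simp only [mem_filter]
    grind
  have hcoins (i : C) : 𝔼 b : V → Bool, (if ∀ u ∈ S, ¬Kills G (update ω x (i, b)) x u then (1 : ℝ)
      else 0) = 1 - (1 - (1 / 2) ^ #{u ∈ S | G.Adj x u}) * if i = c then 1 else 0 := by
    simp only [hspare]
    by_cases hi : i = c
    · simp only [hi, forall_const, if_true, mul_one, sub_sub_cancel]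
      refine expect_boole_forall_mem (P := fun u b => b = (decide (x < u) ^^ (ω u).2 x))
        (fun u => ?_) _
      rw [Fintype.expect_eq_sum_div_card, Fintype.sum_ite_eq']
      simp
    · simp [hi]
  simp only [avgAt]
  rw [← univ_product_univ, expect_product, expect_congr rfl fun i _ => hcoins i,
    expect_sub_distrib, Fintype.expect_const, ← mul_expect, Fintype.expect_eq_sum_div_card,
    Fintype.sum_ite_eq', sparingProb, mul_one_div]

theorem prob_subset_keepers_of_isIndepSet [Nonempty C] {S : Finset V} {v : V}
    (hSv : S ⊆ G.neighborFinset v) (hS : G.IsIndepSet (S : Set V)) (c : C) :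
    prob {ω : V → Draw V C | S ⊆ keepers G ω v c} =
      (1 / Fintype.card C) ^ #S *
        ∏ x ∈ Sᶜ, sparingProb (Fintype.card C) #{u ∈ S | G.Adj x u} := by
  have hevent (ω : V → Draw V C) : S ⊆ keepers G ω v c ↔
      (∀ u ∈ S, (ω u).1 = c) ∧ ∀ x ∈ Sᶜ, ∀ u ∈ S, ¬Kills G ω x u := by
    refine ⟨fun h => ⟨fun u hu => (mem_filter.1 (h hu)).2.1,
      fun x _ u hu => (mem_filter.1 (h hu)).2.2 x⟩, fun h u hu => mem_filter.2
        ⟨hSv hu, h.1 u hu, fun x hx => ?_⟩⟩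
    by_cases hxS : x ∈ S
    · exact hS hxS hu hx.1.ne hx.1
    · exact h.2 x (mem_compl.2 hxS) u hu hx
  have hcolor : 𝔼 ω : V → Draw V C, (if ∀ u ∈ S, (ω u).1 = c then (1 : ℝ) else 0) =
      (1 / Fintype.card C) ^ #S := by
    refine expect_boole_forall_mem (P := fun _ (a : Draw V C) => a.1 = c) (fun u => ?_) S
    rw [← univ_product_univ, expect_product]
    rw [expect_congr rfl fun i _ => Fintype.expect_const (if i = c then (1 : ℝ) else 0),
      Fintype.expect_eq_sum_div_card, Fintype.sum_ite_eq']
  rw [← hcolor, ← expect_mul_prod_of_dependsOn (T := Sᶜ)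
    (g := fun x ω => if ∀ u ∈ S, ¬Kills G ω x u then 1 else 0)]
  · refine expect_congr rfl fun ω _ => ?_
    simp [Set.indicator_apply, hevent, prod_boole, ← ite_and, and_comm]
  · intro ω ω' h
    have hiff : (∀ u ∈ S, (ω u).1 = c) ↔ ∀ u ∈ S, (ω' u).1 = c :=
      forall₂_congr fun u hu => by rw [h u (by simpa using hu)]
    simp only [hiff]
  · intro x _ ω ω' h
    have hiff : (∀ u ∈ S, ¬Kills G ω x u) ↔ ∀ u ∈ S, ¬Kills G ω' x u :=
      forall₂_congr fun u hu => not_congr <| iff_of_eq <| dependsOn_kills G x u <| by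
        rintro y (rfl | rfl)
        exacts [h _ (Set.mem_insert _ _), h _ (Or.inr (by simpa using hu))]
    simp only [hiff]
  · intro x hx ω
    split_ifs with hω
    · rw [avgAt_boole_forall_not_kills (mem_compl.1 hx) hω]
    · simp

end Mean

section Counting

open scoped FinsetFamily

variable {α : Type*} [DecidableEq α] {𝒜 : Finset (Finset α)} {j : ℕ}

theorem card_filter_mem_le_card_shadow (𝒜 : Finset (Finset α)) (x : α) :
    #{A ∈ 𝒜 | x ∈ A} ≤ #(∂ 𝒜) :=
  card_le_card_of_injOn (fun A => A.erase x)
    (fun _ hA => have hA := mem_filter.1 hA; erase_mem_shadow hA.1 hA.2)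
    ((erase_injOn' x).mono fun _ hA => (mem_filter.1 hA).2)

theorem card_filter_mem_le_choose_two (h𝒜 : (𝒜 : Set (Finset α)).Sized 3) (x : α) :
    #{A ∈ 𝒜 | x ∈ A} ≤ (#{P ∈ ∂ 𝒜 | x ∈ P}).choose 2 := by
  have hpair : Injective fun y => ({x, y} : Finset α) := fun y z hyz => by
    replace hyz : ({x, y} : Finset α) = {x, z} := hyz
    have hy : y ∈ ({x, z} : Finset α) := hyz ▸ mem_insert_of_mem (mem_singleton_self y)
    have hz : z ∈ ({x, y} : Finset α) := hyz ▸ mem_insert_of_mem (mem_singleton_self z)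
    grind
  rw [← card_powersetCard]
  refine card_le_card_of_injOn (fun A => (A.erase x).image fun y => {x, y}) (fun A hA => ?_)
    fun A hA B hB hAB => erase_injOn' x (mem_filter.1 hA).2 (mem_filter.1 hB).2
      (image_injective hpair hAB)
  obtain ⟨hA, hx⟩ := mem_filter.1 hA
  refine mem_powersetCard.2 ⟨image_subset_iff.2 fun y hy => mem_filter.2 ⟨?_, by simp⟩, ?_⟩
  · obtain ⟨hyx, hy⟩ := mem_erase.1 hy
    exact mem_shadow_iff_exists_mem_card_add_one.2 ⟨A, hA, by simp [insert_subset_iff, hx, hy],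
      by rw [h𝒜 hA, card_pair hyx.symm]⟩
  · rw [card_image_of_injective _ hpair, card_erase_of_mem hx, h𝒜 hA]

theorem sum_card_filter_mem [Fintype α] (h𝒜 : (𝒜 : Set (Finset α)).Sized j) :
    ∑ x, #{A ∈ 𝒜 | x ∈ A} = j * #𝒜 := by
  have hdouble := sum_card_bipartiteAbove_eq_sum_card_bipartiteBelow (s := univ) (t := 𝒜)
    fun (x : α) A => x ∈ A
  simp only [bipartiteAbove, bipartiteBelow, filter_univ_mem] at hdouble
  rw [hdouble, sum_congr rfl fun A hA => h𝒜 hA, sum_const, smul_eq_mul, mul_comm]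

-- If `x` lies in `a` triples and in `d` of the `P` pairs of the shadow, then `a ≤ P` and
-- `a ≤ d ^ 2 / 2`, so that `a ≤ d * √(P / 2)`; the sum over `x` is the claim.
theorem nine_mul_card_sq_le_two_mul_card_shadow_pow [Finite α]
    (h𝒜 : (𝒜 : Set (Finset α)).Sized 3) : 9 * #𝒜 ^ 2 ≤ 2 * #(∂ 𝒜) ^ 3 := by
  have := Fintype.ofFinite α
  have hpoint (x : α) : √2 * #{A ∈ 𝒜 | x ∈ A} ≤ #{P ∈ ∂ 𝒜 | x ∈ P} * √(#(∂ 𝒜)) := by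
    have hshadow : (#{A ∈ 𝒜 | x ∈ A} : ℝ) ≤ #(∂ 𝒜) :=
      mod_cast card_filter_mem_le_card_shadow 𝒜 x
    have hchoose : (#{A ∈ 𝒜 | x ∈ A} : ℝ) ≤ #{P ∈ ∂ 𝒜 | x ∈ P} ^ 2 / 2 :=
      (Nat.cast_le.2 (card_filter_mem_le_choose_two h𝒜 x)).trans
        (by simpa using Nat.choose_le_pow_div (α := ℝ) 2 #{P ∈ ∂ 𝒜 | x ∈ P})
    refine le_of_sq_le_sq ?_ (by positivity)
    rw [mul_pow, mul_pow, Real.sq_sqrt zero_le_two, Real.sq_sqrt (Nat.cast_nonneg _)]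
    calc _ = 2 * (#{A ∈ 𝒜 | x ∈ A} * #{A ∈ 𝒜 | x ∈ A} : ℝ) := by ring
      _ ≤ 2 * (#{P ∈ ∂ 𝒜 | x ∈ P} ^ 2 / 2 * #(∂ 𝒜)) := by gcongr
      _ = _ := by ring
  have hsum := sum_le_sum fun x (_ : x ∈ univ) => hpoint x
  rw [← mul_sum, ← sum_mul, ← Nat.cast_sum, ← Nat.cast_sum, sum_card_filter_mem h𝒜,
    sum_card_filter_mem h𝒜.shadow] at hsum
  have hsq := pow_le_pow_left₀ (by positivity) hsum 2
  rw [mul_pow, mul_pow, Real.sq_sqrt zero_le_two, Real.sq_sqrt (Nat.cast_nonneg _)] at hsq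
  have : (9 * #𝒜 ^ 2 : ℝ) ≤ 2 * #(∂ 𝒜) ^ 3 := by
    push_cast at hsq
    linarith
  exact_mod_cast this

end Counting

section IndepNeighbors

open scoped FinsetFamily

variable {V : Type*} [Fintype V] [DecidableEq V] {G : SimpleGraph V} [DecidableRel G.Adj]
  {S : Finset V} {v : V} {j : ℕ}

variable (G) in
/-- The independent `j`-element sets of neighbours of `v`. -/
def indepNeighbors (v : V) (j : ℕ) : Finset (Finset V) :=
  {S ∈ powersetCard j (G.neighborFinset v) | G.IsIndepSet (S : Set V)}

theorem mem_indepNeighbors : S ∈ indepNeighbors G v j ↔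
    (S ⊆ G.neighborFinset v ∧ #S = j) ∧ G.IsIndepSet (S : Set V) := by
  rw [indepNeighbors, mem_filter, mem_powersetCard]

theorem card_indepNeighbors_le (G : SimpleGraph V) [DecidableRel G.Adj] (v : V) (j : ℕ) :
    #(indepNeighbors G v j) ≤ (G.degree v).choose j := by
  rw [← G.card_neighborFinset_eq_degree, ← card_powersetCard]
  exact card_filter_le _ _

theorem sized_indepNeighbors (v : V) (j : ℕ) :
    (indepNeighbors G v j : Set (Finset V)).Sized j := fun _ hS => (mem_indepNeighbors.1 hS).1.2

theorem shadow_indepNeighbors_subset (v : V) (j : ℕ) :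
    ∂ (indepNeighbors G v (j + 1)) ⊆ indepNeighbors G v j := fun S hS => by
  obtain ⟨T, hT, hST, hcard⟩ := mem_shadow_iff_exists_mem_card_add_one.1 hS
  obtain ⟨⟨hTv, hTcard⟩, hTG⟩ := mem_indepNeighbors.1 hT
  exact mem_indepNeighbors.2 ⟨⟨hST.trans hTv, by omega⟩, hTG.mono (coe_subset.2 hST)⟩

theorem nine_mul_card_indepNeighbors_three_sq_le (v : V) :
    9 * #(indepNeighbors G v 3) ^ 2 ≤ 2 * #(indepNeighbors G v 2) ^ 3 :=
  (nine_mul_card_sq_le_two_mul_card_shadow_pow (sized_indepNeighbors v 3)).trans <| by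
    gcongr
    exact shadow_indepNeighbors_subset v 2

theorem choose_two_degree_le (v : V) :
    (G.degree v).choose 2 ≤
      #(indepNeighbors G v 2) + (G.induce (G.neighborSet v)).edgeSet.ncard := by
  have hedges : (({S ∈ powersetCard 2 (G.neighborFinset v) | ¬G.IsIndepSet (S : Set V)} :
      Finset (Finset V)) : Set (Finset V)) ⊆
      (fun e => (e.map Subtype.val).toFinset) '' (G.induce (G.neighborSet v)).edgeSet := by
    intro S hS
    obtain ⟨hS, hdep⟩ := mem_filter.1 hS
    obtain ⟨hSv, hcard⟩ := mem_powersetCard.1 hS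
    obtain ⟨x, y, hxy, rfl⟩ := card_eq_two.1 hcard
    simp only [insert_subset_iff, singleton_subset_iff, SimpleGraph.mem_neighborFinset] at hSv
    refine ⟨s(⟨x, hSv.1⟩, ⟨y, hSv.2⟩), ?_, by simp [Sym2.toFinset_mk_eq]⟩
    by_contra hadj
    refine hdep ?_
    simpa [SimpleGraph.IsIndepSet, Set.pairwise_pair, G.adj_comm y x, hxy] using hadj
  rw [← G.card_neighborFinset_eq_degree, ← card_powersetCard,
    ← card_filter_add_card_filter_not fun S : Finset V => G.IsIndepSet (S : Set V)]
  gcongr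
  · exact le_rfl
  · rw [← Set.ncard_coe_finset]
    exact (Set.ncard_le_ncard hedges (Set.toFinite _)).trans (Set.ncard_image_le (Set.toFinite _))

end IndepNeighbors

section SparingProb

variable {k j : ℕ}

theorem sparingProb_nonneg (k j : ℕ) : 0 ≤ sparingProb k j := by
  have hpow : (0 : ℝ) ≤ (1 / 2) ^ j := by positivity
  rcases k.eq_zero_or_pos with rfl | hk
  · simp [sparingProb]
  have hk' : (1 : ℝ) ≤ k := by exact_mod_cast hk
  rw [sparingProb, sub_nonneg, div_le_one (by linarith)]
  linarith

theorem one_sub_pow_le_sparingProb (hk : 1 ≤ k) (hj : j ≤ 2) :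
    (1 - 1 / (2 * k) : ℝ) ^ j ≤ sparingProb k j := by
  obtain ⟨x, hx⟩ : ∃ x, x = (1 / k : ℝ) := ⟨_, rfl⟩
  have hx_nonneg : 0 ≤ x := by rw [hx]; positivity
  have hx_le : x ≤ 1 := by
    rw [hx]
    exact div_le_one_of_le₀ (by exact_mod_cast hk) (by positivity)
  have hhalf : (1 / (2 * k) : ℝ) = x / 2 := by rw [hx]; ring
  rw [sparingProb, hhalf, div_eq_mul_one_div _ (k : ℝ), ← hx]
  interval_cases j <;> nlinarith

theorem sparingProb_le_exp (hj : j ≤ 3) :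
    sparingProb k j ≤ Real.exp (-(7 / (24 * k)) * j) := by
  have hlin : (7 / 24 : ℝ) * j ≤ 1 - (1 / 2) ^ j := by interval_cases j <;> norm_num
  calc sparingProb k j ≤ -(7 / (24 * k)) * j + 1 := by
        have : (7 / (24 * k) * j : ℝ) = 7 / 24 * j / k := by ring
        rw [sparingProb, neg_mul, this, neg_add_eq_sub]
        gcongr
    _ ≤ _ := Real.add_one_le_exp _

end SparingProb

section Mean

variable {V C : Type*} [LinearOrder V] [Fintype V] {G : SimpleGraph V} [DecidableRel G.Adj]
  [Fintype C] [DecidableEq C] {S : Finset V} {v : V} {r : ℕ}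

theorem expect_choose_card_keepers (v : V) (c : C) (j : ℕ) :
    𝔼 ω : V → Draw V C, ((#(keepers G ω v c)).choose j : ℝ) =
      ∑ S ∈ indepNeighbors G v j, prob {ω : V → Draw V C | S ⊆ keepers G ω v c} := by
  have hpowerset (ω : V → Draw V C) : powersetCard j (keepers G ω v c) =
      {S ∈ indepNeighbors G v j | S ⊆ keepers G ω v c} := by
    ext S
    simp only [mem_powersetCard, mem_filter, mem_indepNeighbors]
    exact ⟨fun h => ⟨⟨⟨h.1.trans (filter_subset _ _), h.2⟩, isIndepSet_of_subset_keepers h.1⟩, h.1⟩,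
      fun h => ⟨h.2, h.1.1.2⟩⟩
  simp only [prob, ← card_powersetCard, hpowerset, Finset.natCast_card_filter]
  rw [expect_sum_comm]
  simp [Set.indicator_apply]

variable [Nonempty C]

theorem le_prob_subset_keepers (hreg : G.IsRegularOfDegree r) (hSv : S ⊆ G.neighborFinset v)
    (hS : G.IsIndepSet (S : Set V)) (hcard : #S = 2) (c : C) :
    (1 / Fintype.card C) ^ 2 * (1 - 1 / (2 * Fintype.card C)) ^ (2 * r) ≤
      prob {ω : V → Draw V C | S ⊆ keepers G ω v c} := by
  have hk : 1 ≤ Fintype.card C := Fintype.card_pos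
  have hbase : (0 : ℝ) ≤ 1 - 1 / (2 * Fintype.card C) := by
    rw [sub_nonneg, div_le_one (by positivity)]
    linarith [show (1 : ℝ) ≤ Fintype.card C by exact_mod_cast hk]
  have hsum : ∑ x ∈ Sᶜ, #{u ∈ S | G.Adj x u} = 2 * r := by
    simp [sum_compl_card_filter_adj hS, hreg.degree_eq, hcard]
  rw [prob_subset_keepers_of_isIndepSet hSv hS, hcard, ← hsum, ← prod_pow_eq_pow_sum]
  gcongr with x
  exact one_sub_pow_le_sparingProb hk ((card_filter_le _ _).trans hcard.le)

theorem prob_subset_keepers_le (hreg : G.IsRegularOfDegree r) (hSv : S ⊆ G.neighborFinset v)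
    (hS : G.IsIndepSet (S : Set V)) (hcard : #S = 3) (c : C) :
    prob {ω : V → Draw V C | S ⊆ keepers G ω v c} ≤
      (1 / Fintype.card C) ^ 3 * Real.exp (-(7 * r / (8 * Fintype.card C))) := by
  have hsum : ∑ x ∈ Sᶜ, (#{u ∈ S | G.Adj x u} : ℝ) = 3 * r := by
    rw [← Nat.cast_sum, sum_compl_card_filter_adj hS]
    simp [hreg.degree_eq, hcard]
  have hexp : -(7 * r / (8 * Fintype.card C)) =
      ∑ x ∈ Sᶜ, -(7 / (24 * Fintype.card C)) * (#{u ∈ S | G.Adj x u} : ℝ) := by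
    rw [← mul_sum, hsum]
    ring
  rw [prob_subset_keepers_of_isIndepSet hSv hS, hcard, hexp, Real.exp_sum]
  gcongr with x
  · exact fun x _ => sparingProb_nonneg _ _
  · exact sparingProb_le_exp ((card_filter_le _ _).trans hcard.le)

theorem choose_two_le_min_add_choose_three (m : ℕ) :
    m.choose 2 ≤ min (m - 1) 2 + m.choose 3 := by
  rcases lt_or_ge m 6 with h | h
  · interval_cases m <;> decide
  · exact (Nat.choose_le_succ_of_lt_half_left (by omega)).trans (Nat.le_add_left _ _)

theorem le_expect_savings (hreg : G.IsRegularOfDegree r) (v : V) :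
    #(indepNeighbors G v 2) / Fintype.card C * (1 - 1 / (2 * Fintype.card C)) ^ (2 * r) -
        #(indepNeighbors G v 3) / Fintype.card C ^ 2 *
          Real.exp (-(7 * r / (8 * Fintype.card C))) ≤
      𝔼 ω : V → Draw V C, (savings G ω v : ℝ) := by
  have hk : (Fintype.card C : ℝ) ≠ 0 := by simp
  have hpairs (c : C) : #(indepNeighbors G v 2) *
      ((1 / Fintype.card C) ^ 2 * (1 - 1 / (2 * Fintype.card C)) ^ (2 * r)) ≤
      𝔼 ω : V → Draw V C, ((#(keepers G ω v c)).choose 2 : ℝ) := by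
    rw [expect_choose_card_keepers, ← nsmul_eq_mul]
    refine card_nsmul_le_sum _ _ _ fun S hS => ?_
    obtain ⟨⟨hSv, hcard⟩, hS⟩ := mem_indepNeighbors.1 hS
    exact le_prob_subset_keepers hreg hSv hS hcard c
  have htriples (c : C) : 𝔼 ω : V → Draw V C, ((#(keepers G ω v c)).choose 3 : ℝ) ≤
      #(indepNeighbors G v 3) *
        ((1 / Fintype.card C) ^ 3 * Real.exp (-(7 * r / (8 * Fintype.card C)))) := by
    rw [expect_choose_card_keepers, ← nsmul_eq_mul]
    refine sum_le_card_nsmul _ _ _ fun S hS => ?_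
    obtain ⟨⟨hSv, hcard⟩, hS⟩ := mem_indepNeighbors.1 hS
    exact prob_subset_keepers_le hreg hSv hS hcard c
  calc _ = ∑ _c : C, (#(indepNeighbors G v 2) *
        ((1 / Fintype.card C) ^ 2 * (1 - 1 / (2 * Fintype.card C)) ^ (2 * r)) -
        #(indepNeighbors G v 3) *
          ((1 / Fintype.card C) ^ 3 * Real.exp (-(7 * r / (8 * Fintype.card C)))) : ℝ) := by
        rw [sum_const, card_univ, nsmul_eq_mul]
        field_simp
    _ ≤ ∑ c, 𝔼 ω : V → Draw V C, (((#(keepers G ω v c)).choose 2 : ℝ) -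
        (#(keepers G ω v c)).choose 3) := sum_le_sum fun c _ => by
        rw [expect_sub_distrib]
        exact sub_le_sub (hpairs c) (htriples c)
    _ ≤ 𝔼 ω : V → Draw V C, (savings G ω v : ℝ) := by
        simp only [savings, Nat.cast_sum]
        rw [expect_sum_comm]
        refine sum_le_sum fun c _ => expect_le_expect fun ω _ => sub_le_iff_le_add.2 ?_
        exact_mod_cast choose_two_le_min_add_choose_three _

end Mean

section Regularization

variable {V : Type*} {G : SimpleGraph V} {r : ℕ}

/-- Two disjoint copies of `G`, in which the two copies of each vertex of degree less than `r` are
joined by an edge. Iterating this turns a graph of maximum degree at most `r` into an `r`-regular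
one without creating edges inside neighbourhoods. -/
def doubling (G : SimpleGraph V) (r : ℕ) : SimpleGraph (V × Bool) where
  Adj x y := (x.2 = y.2 ∧ G.Adj x.1 y.1) ∨
    (x.2 ≠ y.2 ∧ x.1 = y.1 ∧ (G.neighborSet x.1).ncard < r)
  symm := ⟨by
    rintro x y (⟨h, h'⟩ | ⟨h, h', h''⟩)
    · exact Or.inl ⟨h.symm, h'.symm⟩
    · exact Or.inr ⟨h.symm, h'.symm, h' ▸ h''⟩⟩
  loopless := ⟨by
    rintro x (⟨-, h⟩ | ⟨h, -⟩)
    · exact G.loopless.irrefl _ h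
    · exact h rfl⟩

theorem neighborSet_doubling_of_lt {v : V} (hv : (G.neighborSet v).ncard < r) (i : Bool) :
    (doubling G r).neighborSet (v, i) =
      insert (v, !i) ((fun w => (w, i)) '' G.neighborSet v) := by
  ext ⟨w, j⟩
  cases i <;> cases j <;> simp [doubling, hv, eq_comm]

theorem neighborSet_doubling_of_le {v : V} (hv : r ≤ (G.neighborSet v).ncard) (i : Bool) :
    (doubling G r).neighborSet (v, i) = (fun w => (w, i)) '' G.neighborSet v := by
  ext ⟨w, j⟩
  cases i <;> cases j <;> simp [doubling, hv.not_gt]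

variable [Finite V]

theorem ncard_neighborSet_doubling (v : V) (i : Bool) :
    ((doubling G r).neighborSet (v, i)).ncard =
      (G.neighborSet v).ncard + if (G.neighborSet v).ncard < r then 1 else 0 := by
  have hcopy : ((fun w => (w, i)) '' G.neighborSet v).ncard = (G.neighborSet v).ncard :=
    Set.ncard_image_of_injective _ (Prod.mk_left_injective i)
  split_ifs with hv
  · rw [neighborSet_doubling_of_lt hv, Set.ncard_insert_of_notMem (by simp) (Set.toFinite _), hcopy]
  · rw [neighborSet_doubling_of_le (not_lt.1 hv), hcopy, add_zero]

theorem ncard_edgeSet_induce_neighborSet_doubling_le (v : V) (i : Bool) :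
    ((doubling G r).induce ((doubling G r).neighborSet (v, i))).edgeSet.ncard ≤
      (G.induce (G.neighborSet v)).edgeSet.ncard := by
  let copy (w : G.neighborSet v) : (doubling G r).neighborSet (v, i) := ⟨(w, i), Or.inl ⟨rfl, w.2⟩⟩
  refine (Set.ncard_le_ncard (t := Sym2.map copy '' (G.induce (G.neighborSet v)).edgeSet) ?_
    (Set.toFinite _)).trans (Set.ncard_image_le (Set.toFinite _))
  rintro ⟨⟨⟨x, a⟩, hx⟩, ⟨⟨y, b⟩, hy⟩⟩ hxy
  obtain ⟨rfl, rfl, hvx, hvy, hxy⟩ : a = i ∧ b = i ∧ G.Adj v x ∧ G.Adj v y ∧ G.Adj x y := by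
    change (doubling G r).Adj (x, a) (y, b) at hxy
    simp only [SimpleGraph.mem_neighborSet, doubling] at hx hy hxy
    cases a <;> cases b <;> cases i <;> grind [SimpleGraph.irrefl]
  exact ⟨s(⟨x, hvx⟩, ⟨y, hvy⟩), hxy, rfl⟩

theorem exists_hom_regular_of_ncard_neighborSet_le {V : Type u} [Finite V] (G : SimpleGraph V)
    (hle : ∀ v, (G.neighborSet v).ncard ≤ r) :
    ∃ (W : Type u) (_ : Finite W) (H : SimpleGraph W), (∀ w, (H.neighborSet w).ncard = r) ∧
      (∀ w, ∃ v, (H.induce (H.neighborSet w)).edgeSet.ncard ≤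
        (G.induce (G.neighborSet v)).edgeSet.ncard) ∧ Nonempty (G →g H) := by
  obtain ⟨m, hm⟩ : ∃ m, ∀ v, r ≤ (G.neighborSet v).ncard + m := ⟨r, fun v => Nat.le_add_left _ _⟩
  induction m generalizing V with
  | zero => exact ⟨V, ‹_›, G, fun v => (hle v).antisymm (hm v), fun v => ⟨v, le_rfl⟩, ⟨.id⟩⟩
  | succ m ih =>
    have hle' (x : V × Bool) : ((doubling G r).neighborSet x).ncard ≤ r := by
      have := hle x.1
      rw [ncard_neighborSet_doubling]
      split_ifs <;> omega
    have hm' (x : V × Bool) : r ≤ ((doubling G r).neighborSet x).ncard + m := by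
      have := hm x.1
      rw [ncard_neighborSet_doubling]
      split_ifs <;> omega
    obtain ⟨W, hW, H, hreg, hedges, ⟨f⟩⟩ := ih (doubling G r) hle' hm'
    refine ⟨W, hW, H, hreg, fun w => ?_,
      ⟨f.comp ⟨fun v => (v, true), fun hvw => Or.inl ⟨rfl, hvw⟩⟩⟩⟩
    obtain ⟨⟨v, i⟩, hv⟩ := hedges w
    exact ⟨v, hv.trans (ncard_edgeSet_induce_neighborSet_doubling_le v i)⟩

end Regularization

section Limits

open Filter Topology

/-- The factor by which the expected savings at a vertex of an `r`-regular graph, coloured with `k`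
colours, gain from the proportion of independent pairs of neighbours, per unit of degree. -/
noncomputable def pairCoeff (r k : ℕ) : ℝ :=
  r / (2 * k) * (1 - 1 / (2 * k)) ^ (2 * r)

/-- The factor by which the expected savings at a vertex of an `r`-regular graph, coloured with `k`
colours, lose from the proportion of independent triples of neighbours, per unit of degree. -/
noncomputable def tripleCoeff (r k : ℕ) : ℝ :=
  r ^ 2 / (6 * k ^ 2) * Real.exp (-(7 * r / (8 * k)))

/-- The limit of `pairCoeff r k` as `r` tends to infinity with `k / r` tending to `β`. -/
noncomputable def pairLimit (β : ℝ) : ℝ :=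
  1 / (2 * β) * Real.exp (-(1 / β))

/-- The limit of `tripleCoeff r k` as `r` tends to infinity with `k / r` tending to `β`. -/
noncomputable def tripleLimit (β : ℝ) : ℝ :=
  1 / (6 * β ^ 2) * Real.exp (-(7 / (8 * β)))

variable {β μ : ℝ} {k : ℕ → ℕ}

theorem tripleCoeff_nonneg (r k : ℕ) : 0 ≤ tripleCoeff r k := by
  unfold tripleCoeff
  positivity

theorem pairLimit_nonneg (hβ : 0 ≤ β) : 0 ≤ pairLimit β := by
  unfold pairLimit
  positivity

theorem tripleLimit_nonneg (β : ℝ) : 0 ≤ tripleLimit β := by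
  unfold tripleLimit
  positivity

theorem tendsto_natCast_div_of_tendsto (hβ : β ≠ 0)
    (hk : Tendsto (fun r => (k r / r : ℝ)) atTop (𝓝 β)) :
    Tendsto (fun r => (r / k r : ℝ)) atTop (𝓝 β⁻¹) := by
  simpa using hk.inv₀ hβ

theorem tendsto_pairCoeff (hβ : β ≠ 0) (hk : Tendsto (fun r => (k r / r : ℝ)) atTop (𝓝 β)) :
    Tendsto (fun r => pairCoeff r (k r)) atTop (𝓝 (pairLimit β)) := by
  have hinv := tendsto_natCast_div_of_tendsto hβ hk
  have hexp : Tendsto (fun r => (1 + -(1 / (2 * k r : ℝ))) ^ r) atTop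
      (𝓝 (Real.exp (-(β⁻¹ / 2)))) :=
    Real.tendsto_one_add_pow_exp_of_tendsto <| (hinv.div_const 2).neg.congr fun r => by ring
  convert (hinv.div_const 2).mul (hexp.pow 2) using 2 with r
  · rw [pairCoeff, pow_mul', ← sub_eq_add_neg]
    ring
  · rw [pairLimit, ← Real.exp_nat_mul]
    congr 1 <;> ring_nf

theorem tendsto_tripleCoeff (hβ : β ≠ 0) (hk : Tendsto (fun r => (k r / r : ℝ)) atTop (𝓝 β)) :
    Tendsto (fun r => tripleCoeff r (k r)) atTop (𝓝 (tripleLimit β)) := by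
  have hinv := tendsto_natCast_div_of_tendsto hβ hk
  convert ((hinv.pow 2).div_const 6).mul
    (Real.continuous_exp.continuousAt.tendsto.comp (hinv.const_mul (7 / 8)).neg) using 2 with r
  · rw [tripleCoeff, comp_apply]
    congr 1 <;> ring_nf
  · rw [tripleLimit]
    congr 1 <;> ring_nf

theorem three_mul_tripleLimit_lt (hβ : 0 < β) (h : 1 - β < pairLimit β) :
    3 * tripleLimit β < 2 * pairLimit β := by
  obtain ⟨s, rfl⟩ : ∃ s, β = s⁻¹ := ⟨β⁻¹, (inv_inv β).symm⟩
  have hs : 0 < s := inv_pos.1 hβ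
  have hpair : pairLimit s⁻¹ = s * Real.exp (-s) / 2 := by
    rw [pairLimit, one_div s⁻¹, inv_inv]
    field_simp
  have htriple : tripleLimit s⁻¹ = s * Real.exp (-s) * (s * Real.exp (s / 8)) / 6 := by
    have hsplit : Real.exp (-(7 / (8 * s⁻¹))) = Real.exp (-s) * Real.exp (s / 8) := by
      rw [← Real.exp_add]
      congr 1
      field_simp
      ring
    rw [tripleLimit, hsplit]
    field_simp
  have hone : Real.exp (-1) ≤ 2 / 5 := by
    linarith [Real.exp_neg_one_lt_d9]
  have hs_le : s ≤ 5 / 4 := by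
    have hmul := mul_inv_cancel₀ hs.ne'
    have hle : (4 / 5 : ℝ) ≤ s⁻¹ := by linarith [Real.mul_exp_neg_le_exp_neg_one s]
    nlinarith
  have hexp : Real.exp (s / 8) ≤ 4 / 3 :=
    (Real.exp_bound_div_one_sub_of_interval (by positivity) (by linarith)).trans <| by
      rw [div_le_div_iff₀ (by linarith) (by norm_num)]
      linarith
  have hfactor : s * Real.exp (s / 8) < 2 := by nlinarith
  rw [hpair, htriple]
  nlinarith [mul_lt_mul_of_pos_left hfactor (mul_pos hs (Real.exp_pos (-s)))]

theorem eventually_four_mul_exp_neg_mul_le_one {c : ℝ} (hc : 0 < c) :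
    ∀ᶠ r : ℕ in atTop, 4 * Real.exp (-(c * r)) * ((r + r ^ 2) ^ 2 + 1) ≤ 1 := by
  have hlittleO := ((isLittleO_pow_exp_pos_mul_atTop 4 hc).def (show (0 : ℝ) < 1 / 20 by norm_num))
  filter_upwards [tendsto_natCast_atTop_atTop.eventually hlittleO, eventually_ge_atTop 1]
    with r hr hr1
  have hr1 : (1 : ℝ) ≤ r := by exact_mod_cast hr1
  have hpoly : ((r + r ^ 2) ^ 2 + 1 : ℝ) ≤ 5 * r ^ 4 := by
    have : (r + r ^ 2 : ℝ) ^ 2 ≤ (2 * r ^ 2) ^ 2 := by gcongr; nlinarith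
    nlinarith [one_le_pow₀ (n := 4) hr1]
  rw [Real.norm_of_nonneg (by positivity), Real.norm_of_nonneg (by positivity)] at hr
  calc 4 * Real.exp (-(c * r)) * ((r + r ^ 2) ^ 2 + 1) ≤
        4 * Real.exp (-(c * r)) * (5 * (1 / 20 * Real.exp (c * r))) := by
        gcongr
        linarith
    _ = Real.exp (-(c * r)) * Real.exp (c * r) := by ring
    _ = 1 := by rw [← Real.exp_add, neg_add_cancel, Real.exp_zero]

-- The exponent is `r` times a quantity tending to `l * (K * l - (β + μ - 1))` with
-- `K = 16 + 16 / β`, which is negative for small `l`.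
theorem exists_eventually_four_mul_exp_mul_le_one (hβ : 0 < β)
    (hk : Tendsto (fun r => (k r / r : ℝ)) atTop (𝓝 β)) (hμ : 1 - β < μ) :
    ∃ l : ℝ, 0 ≤ l ∧ l ≤ 1 / 4 ∧ ∀ᶠ r : ℕ in atTop,
      4 * Real.exp (4 * l ^ 2 * (4 * r + 4 * r ^ 2 / k r) + l * (r + 1 - k r - r * μ)) *
        ((r + r ^ 2) ^ 2 + 1) ≤ 1 := by
  obtain ⟨K, hK⟩ : ∃ K, K = 4 * (4 + 4 * β⁻¹) := ⟨_, rfl⟩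
  have hK_pos : 0 < K := by rw [hK]; positivity
  obtain ⟨l, hl, hl'⟩ : ∃ l : ℝ, 0 < l ∧ l ≤ min (1 / 4) ((β + μ - 1) / (2 * K)) :=
    ⟨_, lt_min (by norm_num) (div_pos (by linarith) (by positivity)), le_rfl⟩
  have hKl : l * (2 * K) ≤ β + μ - 1 :=
    (le_div_iff₀ (by positivity)).1 (hl'.trans (min_le_right _ _))
  have hlim : Tendsto (fun r : ℕ => 4 * l ^ 2 * (4 + 4 * (r / k r : ℝ)) +
      l * (1 + 1 / r - k r / r - μ)) atTop
      (𝓝 (4 * l ^ 2 * (4 + 4 * β⁻¹) + l * (1 + 0 - β - μ))) :=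
    ((((tendsto_natCast_div_of_tendsto hβ.ne' hk).const_mul 4).const_add 4).const_mul _).add
      ((((tendsto_one_div_atTop_nhds_zero_nat.const_add 1).sub hk).sub_const μ).const_mul l)
  have hneg : 4 * l ^ 2 * (4 + 4 * β⁻¹) + l * (1 + 0 - β - μ) < -(l * (K * l / 2)) := by
    have : 4 * l ^ 2 * (4 + 4 * β⁻¹) = l * (K * l) := by rw [hK]; ring
    nlinarith [mul_pos hl (mul_pos hK_pos hl)]
  refine ⟨l, hl.le, hl'.trans (min_le_left _ _), ?_⟩
  filter_upwards [hlim.eventually_lt_const hneg, eventually_ge_atTop 1,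
    eventually_four_mul_exp_neg_mul_le_one (show 0 < l * (K * l / 2) by positivity)]
    with r hr hr1 hbound
  refine le_trans ?_ hbound
  have : (0 : ℝ) < r := by exact_mod_cast hr1
  gcongr
  calc _ = (4 * l ^ 2 * (4 + 4 * (r / k r : ℝ)) + l * (1 + 1 / r - k r / r - μ)) * r := by
        field_simp
    _ ≤ _ := by nlinarith

end Limits

section Sparse

open Filter Topology

theorem mul_sq_sub_mul_cube_le {a b s t : ℝ} (hs : 0 ≤ s) (hst : s ≤ t) (ht : t ≤ 1)
    (hb : 0 ≤ b) (hab : 3 * b ≤ 2 * a) : a * s ^ 2 - b * s ^ 3 ≤ a * t ^ 2 - b * t ^ 3 := by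
  have hquad : t ^ 2 + t * s + s ^ 2 ≤ 3 / 2 * (t + s) := by nlinarith
  have hfactor : b * (t ^ 2 + t * s + s ^ 2) ≤ a * (t + s) := by
    nlinarith [mul_le_mul_of_nonneg_left hquad hb]
  nlinarith [mul_le_mul_of_nonneg_left hfactor (sub_nonneg.2 hst)]

theorem mul_sq_sub_mul_cube_le_of_card {a b s : ℝ} {r n₂ n₃ : ℕ} (hr : 0 < r) (hs : 0 ≤ s)
    (hsn : (s * r) ^ 2 ≤ 2 * n₂) (hn₂ : 2 * n₂ ≤ r ^ 2) (hn₃ : 9 * n₃ ^ 2 ≤ 2 * n₂ ^ 3)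
    (hb : 0 ≤ b) (hab : 3 * b ≤ 2 * a) :
    a * s ^ 2 - b * s ^ 3 ≤ a * (2 * n₂ / r ^ 2) - b * (6 * n₃ / r ^ 3) := by
  have hr : (0 : ℝ) < r := by exact_mod_cast hr
  have hn₂ : (2 * n₂ : ℝ) ≤ r ^ 2 := by exact_mod_cast hn₂
  have hn₃ : (9 * n₃ ^ 2 : ℝ) ≤ 2 * n₂ ^ 3 := by exact_mod_cast hn₃
  have hsq : √(2 * n₂ : ℝ) ^ 2 = 2 * n₂ := Real.sq_sqrt (by positivity)
  have hst : s ≤ √(2 * n₂ : ℝ) / r := (le_div_iff₀ hr).2 (Real.le_sqrt_of_sq_le hsn)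
  have ht : √(2 * n₂ : ℝ) / r ≤ 1 := (div_le_one hr).2 (Real.sqrt_le_iff.2 ⟨hr.le, hn₂⟩)
  have htriples : 6 * n₃ ≤ √(2 * n₂ : ℝ) ^ 3 := by
    refine le_of_sq_le_sq ?_ (by positivity)
    calc (6 * n₃ : ℝ) ^ 2 ≤ (2 * n₂) ^ 3 := by nlinarith
      _ = (√(2 * n₂ : ℝ) ^ 2) ^ 3 := by rw [hsq]
      _ = (√(2 * n₂ : ℝ) ^ 3) ^ 2 := by ring
  calc a * s ^ 2 - b * s ^ 3 ≤ a * (√(2 * n₂) / r) ^ 2 - b * (√(2 * n₂) / r) ^ 3 :=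
        mul_sq_sub_mul_cube_le hs hst ht hb hab
    _ ≤ _ := by
        rw [div_pow, div_pow, hsq]
        gcongr

theorem mul_le_expect_savings {V C : Type*} [LinearOrder V] [Fintype V] {G : SimpleGraph V}
    [DecidableRel G.Adj] [Fintype C] [DecidableEq C] [Nonempty C] {r : ℕ} {δ : ℝ} {v : V}
    (hreg : G.IsRegularOfDegree r) (hr : 0 < r) (hδ : 0 ≤ δ)
    (hsparse : ((G.induce (G.neighborSet v)).edgeSet.ncard : ℝ) ≤ (1 - δ) * r.choose 2)
    (hcoeff : 3 * tripleCoeff r (Fintype.card C) ≤ 2 * pairCoeff r (Fintype.card C)) :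
    r * (pairCoeff r (Fintype.card C) * √(δ * (1 - 1 / r)) ^ 2 -
        tripleCoeff r (Fintype.card C) * √(δ * (1 - 1 / r)) ^ 3) ≤
      𝔼 ω : V → Draw V C, (savings G ω v : ℝ) := by
  have hr' : (1 : ℝ) ≤ r := by exact_mod_cast hr
  have hpairs : δ * (r * (r - 1) / 2) ≤ #(indepNeighbors G v 2) := by
    have hcount : (r.choose 2 : ℝ) ≤ #(indepNeighbors G v 2) +
        (G.induce (G.neighborSet v)).edgeSet.ncard := by
      exact_mod_cast hreg.degree_eq v ▸ choose_two_degree_le v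
    rw [← Nat.cast_choose_two]
    linarith
  have hsn : (√(δ * (1 - 1 / r)) * r) ^ 2 ≤ 2 * #(indepNeighbors G v 2) := by
    have hnonneg : (0 : ℝ) ≤ 1 - 1 / r := sub_nonneg.2 (div_le_one_of_le₀ hr' (by linarith))
    rw [mul_pow, Real.sq_sqrt (mul_nonneg hδ hnonneg)]
    calc δ * (1 - 1 / r) * r ^ 2 = 2 * (δ * (r * (r - 1) / 2)) := by field_simp
      _ ≤ _ := by gcongr
  have hn₂ : 2 * #(indepNeighbors G v 2) ≤ r ^ 2 := by
    have hle := card_indepNeighbors_le G v 2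
    rw [hreg.degree_eq, Nat.choose_two_right, Nat.le_div_iff_mul_le two_pos] at hle
    nlinarith [Nat.sub_le r 1]
  calc _ ≤ r * (pairCoeff r (Fintype.card C) * (2 * #(indepNeighbors G v 2) / r ^ 2) -
        tripleCoeff r (Fintype.card C) * (6 * #(indepNeighbors G v 3) / r ^ 3)) :=
        mul_le_mul_of_nonneg_left (mul_sq_sub_mul_cube_le_of_card hr (Real.sqrt_nonneg _) hsn hn₂
          (nine_mul_card_indepNeighbors_three_sq_le v) (tripleCoeff_nonneg _ _) hcoeff)
          r.cast_nonneg
    _ = _ := by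
        rw [pairCoeff, tripleCoeff]
        field_simp
    _ ≤ _ := le_expect_savings hreg v

theorem eventually_colorable_of_regular {β δ : ℝ} {k : ℕ → ℕ} (hβ : 0 < β) (hδ : 0 < δ)
    (hk : Tendsto (fun r => (k r / r : ℝ)) atTop (𝓝 β))
    (hcond : 1 - β < pairLimit β * √δ ^ 2 - tripleLimit β * √δ ^ 3)
    (hcoeff : 3 * tripleLimit β < 2 * pairLimit β) :
    ∀ᶠ r in atTop, ∀ (V : Type u) [Finite V] (G : SimpleGraph V),
      (∀ v, (G.neighborSet v).ncard = r) →
      (∀ v, ((G.induce (G.neighborSet v)).edgeSet.ncard : ℝ) ≤ (1 - δ) * r.choose 2) →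
      G.Colorable (k r) := by
  obtain ⟨μ, hμ, hμ'⟩ := exists_between hcond
  obtain ⟨l, hl, hl', hlll⟩ := exists_eventually_four_mul_exp_mul_le_one hβ hk hμ
  have hsqrt : Tendsto (fun r : ℕ => √(δ * (1 - 1 / r))) atTop (𝓝 √δ) := by
    simpa using ((tendsto_one_div_atTop_nhds_zero_nat.const_sub 1).const_mul δ).sqrt
  have hpair := tendsto_pairCoeff hβ.ne' hk
  have htriple := tendsto_tripleCoeff hβ.ne' hk
  have hbound : Tendsto (fun r : ℕ => pairCoeff r (k r) * √(δ * (1 - 1 / r)) ^ 2 -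
      tripleCoeff r (k r) * √(δ * (1 - 1 / r)) ^ 3) atTop
      (𝓝 (pairLimit β * √δ ^ 2 - tripleLimit β * √δ ^ 3)) :=
    (hpair.mul (hsqrt.pow 2)).sub (htriple.mul (hsqrt.pow 3))
  filter_upwards [hlll, hbound.eventually_const_lt hμ',
    (htriple.const_mul 3).eventually_lt (hpair.const_mul 2) hcoeff,
    hk.eventually_const_lt hβ, eventually_gt_atTop 0]
    with r hlll hsavings hcoeff hk hr V _ G hreg hsparse
  have : Fintype V := Fintype.ofFinite V
  let _ : LinearOrder V := LinearOrder.lift' (Fintype.equivFin V) (Fintype.equivFin V).injective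
  classical
  have : NeZero (k r) := ⟨fun h => by simp [h] at hk⟩
  have hdeg : G.IsRegularOfDegree r := fun v => by
    rw [← hreg v, ← G.card_neighborSet_eq_degree, ← Nat.card_eq_fintype_card,
      Nat.card_coe_set_eq]
  have hsavings (v : V) : r * μ ≤ 𝔼 ω : V → Draw V (Fin (k r)), (savings G ω v : ℝ) := by
    refine (mul_le_mul_of_nonneg_left hsavings.le r.cast_nonneg).trans ?_
    simpa using mul_le_expect_savings (C := Fin (k r)) hdeg hr hδ.le (hsparse v)
      (by simpa using hcoeff.le)
  simpa using colorable_of_le_expect_savings (fun v => (hdeg v).le) hl hl' hsavings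
    (by simpa using hlll)

end Sparse

end RandomColoring

open Filter RandomColoring in
theorem coloring_lemma_general {γ δ : ℝ} (hγ : γ < 1) (hδ : δ ∈ Set.Ioc 0 1)
    (hcond : γ < δ / (2 * (1 - γ)) * Real.exp (-(1 / (1 - γ))) -
      δ ^ ((3 : ℝ) / 2) / (6 * (1 - γ) ^ 2) * Real.exp (-(7 / (8 * (1 - γ))))) :
    ∃ R : ℕ, ∀ r : ℕ, R ≤ r → ∀ (V : Type u) [Finite V] (G : SimpleGraph V),
      (∀ v, (G.neighborSet v).ncard ≤ r) →
      (∀ v, ((G.induce (G.neighborSet v)).edgeSet.ncard : ℝ) ≤ (1 - δ) * r.choose 2) →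
      G.Colorable ⌊(1 - γ) * r⌋₊ := by
  have hβ : 0 < 1 - γ := sub_pos.2 hγ
  have hcube : δ ^ ((3 : ℝ) / 2) = √δ ^ 3 := by
    rw [Real.sqrt_eq_rpow, ← Real.rpow_natCast, ← Real.rpow_mul hδ.1.le]
    norm_num
  have hsq : √δ ^ 2 = δ := Real.sq_sqrt hδ.1.le
  have hlimit : 1 - (1 - γ) < pairLimit (1 - γ) * √δ ^ 2 - tripleLimit (1 - γ) * √δ ^ 3 := by
    rw [hcube] at hcond
    rw [sub_sub_cancel, hsq, pairLimit, tripleLimit]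
    convert hcond using 1
    ring
  have hcoeff : 3 * tripleLimit (1 - γ) < 2 * pairLimit (1 - γ) := by
    refine three_mul_tripleLimit_lt hβ (hlimit.trans_le ?_)
    rw [hsq]
    exact (sub_le_self _ (mul_nonneg (tripleLimit_nonneg _) (by positivity))).trans
      (mul_le_of_le_one_right (pairLimit_nonneg hβ.le) hδ.2)
  have hfloor := (tendsto_nat_floor_mul_div_atTop hβ.le).comp tendsto_natCast_atTop_atTop
  obtain ⟨R, hR⟩ := eventually_atTop.1
    (eventually_colorable_of_regular hβ hδ.1 hfloor hlimit hcoeff)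
  refine ⟨R, fun r hr V _ G hdeg hsparse => ?_⟩
  obtain ⟨W, _, H, hreg, hedges, ⟨f⟩⟩ := exists_hom_regular_of_ncard_neighborSet_le G hdeg
  refine (hR r hr W H hreg fun w => ?_).of_hom f
  obtain ⟨v, hv⟩ := hedges w
  exact (Nat.cast_le.2 hv).trans (hsparse v)

/-- Let `γ, δ ∈ (0,1)` satisfy
`γ < (δ/(2(1−γ)))·e^{−1/(1−γ)} − (δ^{3/2}/(6(1−γ)²))·e^{−7/(8(1−γ))}`.
Then there is an integer `R` such that for all `r ≥ R`, every graph `G` of maximum degree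
at most `r` in which every neighborhood induces a subgraph with at most `(1−δ)·(r choose 2)`
edges satisfies `χ(G) ≤ (1−γ)·r`. -/
theorem coloring_lemma (γ δ : ℝ) (hγ : γ ∈ Set.Ioo (0 : ℝ) 1) (hδ : δ ∈ Set.Ioo (0 : ℝ) 1)
    (hcond : γ < δ / (2 * (1 - γ)) * Real.exp (-(1 / (1 - γ))) -
      δ ^ ((3 : ℝ) / 2) / (6 * (1 - γ) ^ 2) * Real.exp (-(7 / (8 * (1 - γ))))) :
    ∃ R : ℕ, ∀ r : ℕ, R ≤ r →
      ∀ (V : Type) [Fintype V] [DecidableEq V] (G : SimpleGraph V) [DecidableRel G.Adj],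
        G.maxDegree ≤ r →
        (∀ v : V, (((G.induce (G.neighborSet v)).edgeSet.ncard : ℝ)) ≤
          (1 - δ) * (r.choose 2 : ℝ)) →
        ∃ n : ℕ, (n : ℝ) ≤ (1 - γ) * (r : ℝ) ∧ G.Colorable n := by
  obtain ⟨R, hR⟩ := coloring_lemma_general hγ.2 (Set.Ioo_subset_Ioc_self hδ) hcond
  refine ⟨R, fun r hr V _ _ G _ hdeg hsparse => ⟨_, ?_, hR r hr V G (fun v => ?_) hsparse⟩⟩
  · exact Nat.floor_le (mul_nonneg (sub_nonneg.2 hγ.2.le) r.cast_nonneg)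
  · rw [← Nat.card_coe_set_eq, Nat.card_eq_fintype_card, G.card_neighborSet_eq_degree]
    exact (G.degree_le_maxDegree v).trans hdeg
end

section
/- Let γ ∈ (0,1). There is an R so that for every r-regular simple graph G with r ≥ R and every vertex u of G, when the random coloring procedure is performed with C = ⌈(1−γ)r⌉ colors, the random variables P_u and T_u satisfy: P[|P_u − E[P_u]| ≥ √r·(log r)³] ≤ r^{−(1/2)·log log r} and P[|T_u − E[T_u]| ≥ √r·(log r)⁴] ≤ r^{−(1/2)·log log r}. -/
section ColoringProcedure

variable {V : Type} [Fintype V] [LinearOrder V] (G : SimpleGraph V) [DecidableRel G.Adj]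

/-- The sample space of the random coloring procedure with `C` colors: a color for every
vertex together with an orientation (a Boolean) for every edge. -/
abbrev ProcSpace (C : ℕ) := (V → Fin C) × (G.edgeSet → Bool)

/-- The larger endvertex of an edge (used to decode the Boolean orientation). -/
def sym2max (e : Sym2 V) : V := Sym2.lift ⟨fun a b => max a b, fun a b => max_comm a b⟩ e

/-- The edge `e` points towards its endvertex `v` under the orientation `σ`:
the Boolean `σ e` is `true` exactly if `e` points towards its larger endvertex. -/
def pointsTo (σ : G.edgeSet → Bool) (e : G.edgeSet) (v : V) : Prop :=
  σ e = decide (v = sym2max (e : Sym2 V))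

/-- The vertex `v` stays colored after the uncoloring step: no neighbor of `v` received
the same color with the connecting edge pointing towards `v`. -/
def keepsColor {C : ℕ} (ω : ProcSpace G C) (v : V) : Prop :=
  ∀ w, (h : G.Adj v w) → ω.1 w = ω.1 v →
    ¬ pointsTo G ω.2 ⟨s(v, w), G.mem_edgeSet.mpr h⟩ v

/-- `P_u`: the number of pairs of distinct non-adjacent neighbors of `u` that are both
still colored after the uncoloring step and have the same color. -/
noncomputable def pairsSaved {C : ℕ} (u : V) (ω : ProcSpace G C) : ℕ :=
  {p : Finset V | ∃ x y, x ≠ y ∧ p = {x, y} ∧ G.Adj u x ∧ G.Adj u y ∧ ¬ G.Adj x y ∧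
    ω.1 x = ω.1 y ∧ keepsColor G ω x ∧ keepsColor G ω y}.ncard

/-- `T_u`: the number of triples of distinct pairwise non-adjacent neighbors of `u` that
are all still colored after the uncoloring step and share the same color. -/
noncomputable def triplesSaved {C : ℕ} (u : V) (ω : ProcSpace G C) : ℕ :=
  {p : Finset V | ∃ x y z, x ≠ y ∧ x ≠ z ∧ y ≠ z ∧ p = {x, y, z} ∧
    G.Adj u x ∧ G.Adj u y ∧ G.Adj u z ∧ ¬ G.Adj x y ∧ ¬ G.Adj x z ∧ ¬ G.Adj y z ∧
    ω.1 x = ω.1 y ∧ ω.1 y = ω.1 z ∧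
    keepsColor G ω x ∧ keepsColor G ω y ∧ keepsColor G ω z}.ncard

/-- The probability of an event under the uniform distribution on the sample space. -/
noncomputable def procProb (C : ℕ) (S : Set (ProcSpace G C)) : ℝ :=
  (S.ncard : ℝ) / (Fintype.card (ProcSpace G C) : ℝ)

/-- The expectation of a random variable under the uniform distribution on the sample
space. -/
noncomputable def procExp (C : ℕ) (f : ProcSpace G C → ℝ) : ℝ :=
  (∑ ω : ProcSpace G C, f ω) / (Fintype.card (ProcSpace G C) : ℝ)

end ColoringProcedure

/-!
Truncate the contribution of every color to the count of monochromatic `m`-sets at `(log r) ^ m`.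
This is harmless: by a union bound it is unlikely that some color occurs more than `log r` times in
`N(u)`. After truncation, recoloring one vertex moves the count by at most `2 (log r) ^ m`, and the
exponential moments are controlled by the mean-square influences of the single coordinates.

It is essential to average over the colors first. A vertex outside `N(u)` matters only if its old
or new color occurs among its neighbors in `N(u)`, and an orientation has averaged influence at most
`(log r) ^ m / C`, since its edge must be monochromatic. Summing over the at most `r ^ 2` edges that
meet `N(u)` gives a variance proxy of order `r (log r) ^ (2 m)`, and the Chernoff bound with
parameter `2 log log r / (√r (log r) ^ m)` yields the tail estimate.
-/

section BoundedInfluence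

open Finset Function
open scoped BigOperators

lemma sq_expect_le_expect_sq {Ω : Type*} [Fintype Ω] (g : Ω → ℝ) :
    (𝔼 a, g a) ^ 2 ≤ 𝔼 a, g a ^ 2 := by
  simpa only [expect_eq_sum_div_card] using sum_div_card_sq_le_sum_sq_div_card

lemma expect_prod_type_right {α β : Type*} [Fintype α] [Fintype β] (f : α × β → ℝ) :
    𝔼 p, f p = 𝔼 b, 𝔼 a, f (a, b) := by
  rw [← univ_product_univ, expect_product, expect_comm]

lemma expect_exp_mul_le {Ω : Type*} [Fintype Ω] [Nonempty Ω] {h : Ω → ℝ} {M v lam : ℝ}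
    (hM : ∀ a b, |h a - h b| ≤ M) (hv : 𝔼 a, 𝔼 b, (h a - h b) ^ 2 ≤ v) (hlam : |lam| * M ≤ 1) :
    𝔼 a, Real.exp (lam * h a) ≤ Real.exp (lam ^ 2 * v + lam * 𝔼 a, h a) := by
  set m := 𝔼 a, h a with hm
  have centered (a : Ω) : h a - m = 𝔼 b, (h a - h b) := by
    rw [expect_sub_distrib, Fintype.expect_const]
  have abs_le_one (a : Ω) : |lam * (h a - m)| ≤ 1 := by
    rw [abs_mul, centered]
    refine (mul_le_mul_of_nonneg_left ?_ (abs_nonneg lam)).trans hlam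
    exact (abs_expect_le _ _).trans (expect_le univ_nonempty fun b _ => hM a b)
  have pointwise (a : Ω) : Real.exp (lam * h a) ≤
      Real.exp (lam * m) * (1 + lam * (h a - m) + lam ^ 2 * 𝔼 b, (h a - h b) ^ 2) := by
    have quadratic : Real.exp (lam * (h a - m)) ≤ 1 + lam * (h a - m) + (lam * (h a - m)) ^ 2 := by
      linarith [le_of_abs_le (Real.abs_exp_sub_one_sub_id_le (abs_le_one a))]
    rw [show lam * h a = lam * m + lam * (h a - m) by ring, Real.exp_add]
    gcongr
    refine quadratic.trans ?_
    rw [mul_pow]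
    gcongr
    exact centered a ▸ sq_expect_le_expect_sq _
  calc 𝔼 a, Real.exp (lam * h a)
      ≤ 𝔼 a, Real.exp (lam * m) * (1 + lam * (h a - m) + lam ^ 2 * 𝔼 b, (h a - h b) ^ 2) :=
        expect_le_expect fun a _ => pointwise a
    _ = Real.exp (lam * m) * (1 + lam ^ 2 * 𝔼 a, 𝔼 b, (h a - h b) ^ 2) := by
        simp only [← mul_expect, expect_add_distrib, expect_sub_distrib, Fintype.expect_const,
          ← hm, sub_self, mul_zero, add_zero]
    _ ≤ Real.exp (lam * m) * Real.exp (lam ^ 2 * v) := by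
        gcongr
        exact (by gcongr : _ ≤ 1 + lam ^ 2 * v).trans (by
          linarith [Real.add_one_le_exp (lam ^ 2 * v)])
    _ = Real.exp (lam ^ 2 * v + lam * m) := by rw [← Real.exp_add, add_comm]

section Pi

variable {ι : Type*} [DecidableEq ι] {Ω : ι → Type*} [∀ i, Fintype (Ω i)]

lemma expect_expect_update [Fintype ι] (f : (∀ i, Ω i) → ℝ) (i : ι) [Nonempty (Ω i)] :
    𝔼 x, 𝔼 a, f (update x i a) = 𝔼 x, f x := by
  -- `(x, a) ↦ (update x i a, x i)` is an involution.
  let e : (∀ j, Ω j) × Ω i ≃ (∀ j, Ω j) × Ω i :=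
    Involutive.toPerm (fun p => (update p.1 i p.2, p.1 i)) fun p => by simp
  calc 𝔼 x, 𝔼 a, f (update x i a) = 𝔼 p : (∀ j, Ω j) × Ω i, f (update p.1 i p.2) :=
        by rw [expect_prod_type_right, expect_comm]
    _ = 𝔼 p : (∀ j, Ω j) × Ω i, f p.1 := Fintype.expect_equiv e _ _ fun _ => rfl
    _ = 𝔼 x, f x := by
        rw [expect_prod_type_right]
        exact Fintype.expect_const (𝔼 x, f x)

/-- Resampling a single coordinate changes `f` by at most `M`, and, when the two values of
coordinate `i` are independent and uniform, by at most `v i` in mean square. -/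
structure BoundedInfluence (f : (∀ i, Ω i) → ℝ) (M : ℝ) (v : ι → ℝ) : Prop where
  abs_sub_le (i : ι) (x : ∀ i, Ω i) (a b : Ω i) : |f (update x i a) - f (update x i b)| ≤ M
  expect_sq_le (i : ι) (x : ∀ i, Ω i) :
    𝔼 a, 𝔼 b, (f (update x i a) - f (update x i b)) ^ 2 ≤ v i

variable {f : (∀ i, Ω i) → ℝ} {M lam : ℝ} {v : ι → ℝ}

lemma dependsOn_expect_update {S : Finset ι} {i : ι} (hf : DependsOn f (insert i S)) :
    DependsOn (fun x => 𝔼 c, f (update x i c)) (S : Set ι) := by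
  intro x y hxy
  refine expect_congr rfl fun c _ => hf fun j hj => ?_
  obtain rfl | hji := eq_or_ne j i
  · simp
  · simp [hji, hxy j (hj.resolve_left hji)]

variable [∀ i, Nonempty (Ω i)]

lemma BoundedInfluence.of_abs_le {w : ι → ℝ} (hM : ∀ i, w i ≤ M)
    (hf : ∀ i x a b, |f (update x i a) - f (update x i b)| ≤ w i) :
    BoundedInfluence f M (fun i => w i ^ 2) where
  abs_sub_le i x a b := (hf i x a b).trans (hM i)
  expect_sq_le i x := expect_le univ_nonempty fun a _ => expect_le univ_nonempty fun b _ =>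
    sq_le_sq.2 ((hf i x a b).trans (le_abs_self _))

lemma BoundedInfluence.expect_update (hf : BoundedInfluence f M v) (i : ι) :
    BoundedInfluence (fun x => 𝔼 c, f (update x i c)) M v where
  abs_sub_le j x a b := by
    obtain rfl | hij := eq_or_ne j i
    · simpa using (abs_nonneg _).trans (hf.abs_sub_le j x a a)
    · rw [← expect_sub_distrib]
      refine (abs_expect_le _ _).trans (expect_le univ_nonempty fun c _ => ?_)
      rw [update_comm hij, update_comm hij]
      exact hf.abs_sub_le ..
  expect_sq_le j x := by
    obtain rfl | hij := eq_or_ne j i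
    · have nonneg : 0 ≤ v j := (expect_nonneg fun a _ => expect_nonneg fun b _ =>
        sq_nonneg _).trans (hf.expect_sq_le j x)
      simpa using nonneg
    · calc 𝔼 a, 𝔼 b, (𝔼 c, f (update (update x j a) i c) - 𝔼 c, f (update (update x j b) i c)) ^ 2
          ≤ 𝔼 a, 𝔼 b, 𝔼 c, (f (update (update x i c) j a) - f (update (update x i c) j b)) ^ 2 := by
            refine expect_le_expect fun a _ => expect_le_expect fun b _ => ?_
            simp only [update_comm hij, ← expect_sub_distrib]
            exact sq_expect_le_expect_sq _
        _ = 𝔼 c, 𝔼 a, 𝔼 b, (f (update (update x i c) j a) - f (update (update x i c) j b)) ^ 2 := by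
            refine (expect_congr rfl fun a _ => ?_).trans (expect_comm _ _ _)
            exact expect_comm _ _ _
        _ ≤ v j := expect_le univ_nonempty fun c _ => hf.expect_sq_le j _

variable [Fintype ι]

-- Integrating out one coordinate of `S` at a time keeps both influence bounds.
lemma BoundedInfluence.expect_exp_mul_le_of_dependsOn {S : Finset ι}
    (hf : BoundedInfluence f M v) (hS : DependsOn f (S : Set ι)) (hlam : |lam| * M ≤ 1) :
    𝔼 x, Real.exp (lam * f x) ≤ Real.exp (lam ^ 2 * ∑ i ∈ S, v i + lam * 𝔼 x, f x) := by
  induction S using Finset.induction_on generalizing f with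
  | empty =>
    obtain ⟨x₀⟩ : Nonempty (∀ i, Ω i) := inferInstance
    have const (x : ∀ i, Ω i) : f x = f x₀ := hS (by simp)
    simp [const]
  | insert i S hi ih =>
    calc 𝔼 x, Real.exp (lam * f x) = 𝔼 x, 𝔼 c, Real.exp (lam * f (update x i c)) :=
          (expect_expect_update _ i).symm
      _ ≤ 𝔼 x, Real.exp (lam ^ 2 * v i) * Real.exp (lam * 𝔼 c, f (update x i c)) :=
          expect_le_expect fun x _ => (expect_exp_mul_le (hf.abs_sub_le i x)
            (hf.expect_sq_le i x) hlam).trans_eq (Real.exp_add _ _)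
      _ ≤ Real.exp (lam ^ 2 * v i) *
            Real.exp (lam ^ 2 * ∑ i ∈ S, v i + lam * 𝔼 x, 𝔼 c, f (update x i c)) := by
          rw [← mul_expect]
          gcongr
          exact ih (hf.expect_update i) (dependsOn_expect_update (by simpa using hS))
      _ = Real.exp (lam ^ 2 * ∑ i ∈ insert i S, v i + lam * 𝔼 x, f x) := by
          rw [expect_expect_update, ← Real.exp_add, sum_insert hi]
          ring_nf

lemma BoundedInfluence.expect_exp_mul_le (hf : BoundedInfluence f M v) (hlam : |lam| * M ≤ 1) :
    𝔼 x, Real.exp (lam * f x) ≤ Real.exp (lam ^ 2 * ∑ i, v i + lam * 𝔼 x, f x) :=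
  hf.expect_exp_mul_le_of_dependsOn (by simpa using dependsOn_univ f) hlam

end Pi

/-- Only the average over the first block has to be insensitive to the coordinates of the second
block. -/
lemma expect_exp_mul_le_of_boundedInfluence {ι κ : Type*} [Fintype ι] [DecidableEq ι] [Fintype κ]
    [DecidableEq κ] {Ω : ι → Type*} [∀ i, Fintype (Ω i)] [∀ i, Nonempty (Ω i)] {Ω' : κ → Type*}
    [∀ j, Fintype (Ω' j)] [∀ j, Nonempty (Ω' j)] {f : (∀ i, Ω i) × (∀ j, Ω' j) → ℝ} {M lam : ℝ}
    {v : ι → ℝ} {w : κ → ℝ} (hfst : ∀ y, BoundedInfluence (fun x => f (x, y)) M v)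
    (hsnd : BoundedInfluence (fun y => 𝔼 x, f (x, y)) M w) (hlam : |lam| * M ≤ 1) :
    𝔼 p, Real.exp (lam * f p) ≤ Real.exp (lam ^ 2 * (∑ i, v i + ∑ j, w j) + lam * 𝔼 p, f p) :=
  calc 𝔼 p, Real.exp (lam * f p) = 𝔼 y, 𝔼 x, Real.exp (lam * f (x, y)) := expect_prod_type_right _
    _ ≤ 𝔼 y, Real.exp (lam ^ 2 * ∑ i, v i) * Real.exp (lam * 𝔼 x, f (x, y)) :=
        expect_le_expect fun y _ =>
          ((hfst y).expect_exp_mul_le hlam).trans_eq (Real.exp_add _ _)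
    _ ≤ Real.exp (lam ^ 2 * ∑ i, v i) *
          Real.exp (lam ^ 2 * ∑ j, w j + lam * 𝔼 y, 𝔼 x, f (x, y)) := by
        rw [← mul_expect]
        gcongr
        exact hsnd.expect_exp_mul_le hlam
    _ = Real.exp (lam ^ 2 * (∑ i, v i + ∑ j, w j) + lam * 𝔼 p, f p) := by
        rw [expect_prod_type_right f, ← Real.exp_add]
        ring_nf

end BoundedInfluence

section UniformProb

open Finset Function
open scoped BigOperators

/-- The probability of an event under the uniform distribution on a finite type; for the sample
space of the coloring procedure this is `procProb`. -/
noncomputable def uniformProb {α : Type*} [Fintype α] (S : Set α) : ℝ :=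
  S.ncard / Fintype.card α

variable {α : Type*} [Fintype α]

lemma uniformProb_eq_expect_indicator (S : Set α) : uniformProb S = 𝔼 a, S.indicator 1 a := by
  classical
  rw [uniformProb, Set.ncard_eq_toFinset_card', Fintype.expect_eq_sum_div_card,
    ← Set.coe_toFinset S, sum_indicator_subset 1 (subset_univ _)]
  simp

lemma uniformProb_mono {S T : Set α} (h : S ⊆ T) : uniformProb S ≤ uniformProb T := by
  unfold uniformProb
  gcongr
  exact Set.toFinite T

lemma uniformProb_union_le (S T : Set α) :
    uniformProb (S ∪ T) ≤ uniformProb S + uniformProb T := by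
  unfold uniformProb
  rw [← add_div]
  gcongr
  exact_mod_cast Set.ncard_union_le S T

lemma uniformProb_biUnion_le {ι : Type*} (s : Finset ι) (S : ι → Set α) :
    uniformProb (⋃ i ∈ s, S i) ≤ ∑ i ∈ s, uniformProb (S i) := by
  classical
  induction s using Finset.induction_on with
  | empty => simp [uniformProb]
  | insert i s hi ih =>
    rw [set_biUnion_insert, sum_insert hi]
    exact (uniformProb_union_le _ _).trans (by gcongr)

lemma uniformProb_le_expect {S : Set α} {f : α → ℝ} (hf : ∀ a, 0 ≤ f a)
    (hS : ∀ a ∈ S, 1 ≤ f a) : uniformProb S ≤ 𝔼 a, f a := by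
  rw [uniformProb_eq_expect_indicator]
  refine expect_le_expect fun a _ => ?_
  by_cases ha : a ∈ S
  · simpa [ha] using hS a ha
  · simpa [ha] using hf a

lemma uniformProb_fst_preimage {β : Type*} [Fintype β] [Nonempty β] (S : Set α) :
    uniformProb (Prod.fst ⁻¹' S : Set (α × β)) = uniformProb S := by
  rw [← Set.prod_univ, uniformProb, uniformProb, Set.ncard_prod, Set.ncard_univ,
    Fintype.card_prod, Nat.card_eq_fintype_card]
  push_cast
  exact mul_div_mul_right _ _ (by positivity)

lemma uniformProb_univ_pi {ι : Type*} [Fintype ι] [DecidableEq ι] {Ω : ι → Type*}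
    [∀ i, Fintype (Ω i)] (S : ∀ i, Set (Ω i)) :
    uniformProb (Set.univ.pi S) = ∏ i, uniformProb (S i) := by
  classical
  have coe_eq : Set.univ.pi S = ↑(Fintype.piFinset fun i => (S i).toFinset) := by simp
  rw [uniformProb, coe_eq, Set.ncard_coe_finset, Fintype.card_piFinset, Fintype.card_pi]
  simp only [uniformProb, prod_div_distrib, Nat.cast_prod, Set.ncard_eq_toFinset_card']

lemma uniformProb_le_abs_sub_expect_le {f : α → ℝ} {lam W s : ℝ} (hlam : 0 ≤ lam)
    (hpos : 𝔼 a, Real.exp (lam * f a) ≤ Real.exp (W + lam * 𝔼 a, f a))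
    (hneg : 𝔼 a, Real.exp (-lam * f a) ≤ Real.exp (W + -lam * 𝔼 a, f a)) :
    uniformProb {a | s ≤ |f a - 𝔼 b, f b|} ≤ 2 * Real.exp (W - lam * s) := by
  set m := 𝔼 b, f b
  calc uniformProb {a | s ≤ |f a - m|}
      ≤ 𝔼 a, (Real.exp (lam * (-m - s)) * Real.exp (lam * f a) +
          Real.exp (lam * (m - s)) * Real.exp (-lam * f a)) := by
        refine uniformProb_le_expect (fun a => by positivity) fun a ha => ?_
        rw [← Real.exp_add, ← Real.exp_add]
        rcases le_abs.1 (show s ≤ |f a - m| from ha) with h | h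
        · refine (Real.one_le_exp ?_).trans (le_add_of_nonneg_right (Real.exp_nonneg _))
          linarith [mul_le_mul_of_nonneg_left h hlam]
        · refine (Real.one_le_exp ?_).trans (le_add_of_nonneg_left (Real.exp_nonneg _))
          linarith [mul_le_mul_of_nonneg_left h hlam]
    _ ≤ Real.exp (lam * (-m - s)) * Real.exp (W + lam * m) +
          Real.exp (lam * (m - s)) * Real.exp (W + -lam * m) := by
        rw [expect_add_distrib, ← mul_expect, ← mul_expect]
        gcongr
    _ = 2 * Real.exp (W - lam * s) := by
        rw [← Real.exp_add, ← Real.exp_add, two_mul]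
        ring_nf

lemma uniformProb_le_abs_sub_expect_le_add {f g : α → ℝ} {A : Set α} {K δ : ℝ} (t : ℝ)
    (hfg : ∀ a ∉ A, f a = g a) (hK : ∀ a, |f a - g a| ≤ K) (hA : K * uniformProb A ≤ δ) :
    uniformProb {a | t ≤ |f a - 𝔼 b, f b|} ≤
      uniformProb A + uniformProb {a | t - δ ≤ |g a - 𝔼 b, g b|} := by
  have expect_close : |𝔼 b, g b - 𝔼 b, f b| ≤ δ :=
    calc |𝔼 b, g b - 𝔼 b, f b| ≤ 𝔼 b, K * A.indicator 1 b := by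
          rw [← expect_sub_distrib]
          refine (abs_expect_le _ _).trans (expect_le_expect fun b _ => ?_)
          by_cases hb : b ∈ A
          · simpa [hb, abs_sub_comm] using hK b
          · simp [hb, hfg b hb]
      _ ≤ δ := by rwa [← mul_expect, ← uniformProb_eq_expect_indicator]
  refine (uniformProb_mono fun a ha => ?_).trans (uniformProb_union_le _ _)
  refine or_iff_not_imp_left.2 fun haA => ?_
  have triangle := abs_sub_le (g a) (𝔼 b, g b) (𝔼 b, f b)
  rw [Set.mem_ofPred_eq, hfg a haA] at ha
  rw [Set.mem_ofPred_eq]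
  linarith

end UniformProb

section RandomColoring

open Finset

variable {ι Ω : Type*} [Fintype ι] [DecidableEq ι] [Fintype Ω] [Nonempty Ω]

lemma uniformProb_forall_mem_eq (S : Finset ι) (c : Ω) :
    uniformProb {f : ι → Ω | ∀ y ∈ S, f y = c} = (1 / Fintype.card Ω) ^ #S := by
  have pi_eq : {f : ι → Ω | ∀ y ∈ S, f y = c} =
      Set.univ.pi fun y => if y ∈ S then {c} else Set.univ := by
    ext f
    simp
  have factor (y : ι) : uniformProb (if y ∈ S then {c} else Set.univ : Set Ω) =
      if y ∈ S then 1 / (Fintype.card Ω : ℝ) else 1 := by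
    split_ifs <;> simp [uniformProb]
  rw [pi_eq, uniformProb_univ_pi, prod_congr rfl fun y _ => factor y, prod_ite_mem, univ_inter,
    prod_const]

lemma uniformProb_apply_eq_apply_le {x y : ι} (hxy : x ≠ y) :
    uniformProb {f : ι → Ω | f x = f y} ≤ 1 / Fintype.card Ω :=
  calc uniformProb {f : ι → Ω | f x = f y}
      ≤ uniformProb (⋃ c ∈ univ, {f : ι → Ω | ∀ z ∈ ({x, y} : Finset ι), f z = c}) :=
        uniformProb_mono fun f hf => by simp [show f x = f y from hf]
    _ ≤ ∑ c : Ω, (1 / Fintype.card Ω : ℝ) ^ 2 := by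
        refine (uniformProb_biUnion_le _ _).trans_eq (sum_congr rfl fun c _ => ?_)
        rw [uniformProb_forall_mem_eq, card_pair hxy]
    _ = 1 / Fintype.card Ω := by
        rw [sum_const, card_univ, nsmul_eq_mul]
        field_simp

lemma uniformProb_exists_le_card_filter_eq_le [DecidableEq Ω] (N : Finset ι) (k : ℕ) :
    uniformProb {f : ι → Ω | ∃ c, k ≤ #{y ∈ N | f y = c}} ≤
      Fintype.card Ω * ((#N).choose k * (1 / Fintype.card Ω) ^ k) :=
  calc uniformProb {f : ι → Ω | ∃ c, k ≤ #{y ∈ N | f y = c}}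
      ≤ uniformProb (⋃ c ∈ univ, ⋃ S ∈ N.powersetCard k, {f : ι → Ω | ∀ y ∈ S, f y = c}) := by
        refine uniformProb_mono ?_
        rintro f ⟨c, hc⟩
        obtain ⟨S, hS, hk⟩ := exists_subset_card_eq hc
        simp only [Set.mem_iUnion]
        exact ⟨c, mem_univ c, S, mem_powersetCard.2 ⟨hS.trans (filter_subset _ _), hk⟩,
          fun y hy => (mem_filter.1 (hS hy)).2⟩
    _ ≤ ∑ _c : Ω, ∑ _S ∈ N.powersetCard k, (1 / Fintype.card Ω : ℝ) ^ k := by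
        refine (uniformProb_biUnion_le _ _).trans (sum_le_sum fun c _ => ?_)
        refine (uniformProb_biUnion_le _ _).trans_eq (sum_congr rfl fun S hS => ?_)
        rw [uniformProb_forall_mem_eq, (mem_powersetCard.1 hS).2]
    _ = Fintype.card Ω * ((#N).choose k * (1 / Fintype.card Ω) ^ k) := by
        simp only [sum_const, card_univ, card_powersetCard, nsmul_eq_mul]

end RandomColoring

section DegreeSums

open Finset

variable {V : Type*} [Fintype V] (G : SimpleGraph V) [DecidableRel G.Adj] (N : Finset V)

lemma sum_card_filter_adj_eq_sum_degree : ∑ w, #{y ∈ N | G.Adj w y} = ∑ y ∈ N, G.degree y := by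
  refine (sum_card_bipartiteAbove_eq_sum_card_bipartiteBelow G.Adj).trans
    (sum_congr rfl fun y _ => ?_)
  rw [← G.card_neighborFinset_eq_degree, bipartiteBelow]
  congr 1
  ext w
  simp [G.adj_comm]

lemma card_filter_exists_mem_edge_le_sum_degree [DecidableEq V] :
    #{e : G.edgeSet | ∃ z ∈ N, z ∈ (e : Sym2 V)} ≤ ∑ y ∈ N, G.degree y :=
  calc #{e : G.edgeSet | ∃ z ∈ N, z ∈ (e : Sym2 V)}
      = #(({e | ∃ z ∈ N, z ∈ (e : Sym2 V)} : Finset G.edgeSet).map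
          (Function.Embedding.subtype _)) := (card_map _).symm
    _ ≤ #(N.biUnion fun y => G.incidenceFinset y) := by
        refine card_le_card fun e he => ?_
        obtain ⟨e, hmeets, rfl⟩ := mem_map.1 he
        obtain ⟨z, hzN, hze⟩ := (mem_filter.1 hmeets).2
        exact mem_biUnion.2 ⟨z, hzN, (G.mem_incidenceFinset z e).2 ⟨e.2, hze⟩⟩
    _ ≤ ∑ y ∈ N, #(G.incidenceFinset y) := card_biUnion_le
    _ = ∑ y ∈ N, G.degree y := sum_congr rfl fun y _ => G.card_incidenceFinset_eq_degree y

end DegreeSums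

section TruncatedCount

open Finset Function
open scoped BigOperators

variable {V : Type} [LinearOrder V] (G : SimpleGraph V) {C : ℕ}

/-- The vertex `x` has color `c` at the end of the procedure. -/
def RetainsColor (c : Fin C) (ω : ProcSpace G C) (x : V) : Prop :=
  ω.1 x = c ∧ keepsColor G ω x

open scoped Classical in
/-- The number of sets of the family `F` all of whose vertices have color `c` at the end of the
procedure. -/
noncomputable def classCount (F : Finset (Finset V)) (c : Fin C) (ω : ProcSpace G C) : ℕ :=
  #{p ∈ F | ∀ x ∈ p, RetainsColor G c ω x}

open scoped Classical in
/-- The number of sets of the family `F` that are colored with a single color at the end of the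
procedure. The variables `P_u` and `T_u` arise from the independent pairs and triples in the
neighborhood of `u`. -/
noncomputable def savedCount (F : Finset (Finset V)) (ω : ProcSpace G C) : ℕ :=
  #{p ∈ F | ∃ c, ∀ x ∈ p, RetainsColor G c ω x}

/-- The variable `savedCount` with the contribution of every color truncated at `B`, which bounds
the influence of a single vertex. -/
noncomputable def truncCount (F : Finset (Finset V)) (B : ℝ) (ω : ProcSpace G C) : ℝ :=
  ∑ c, min (classCount G F c ω : ℝ) B

variable {G} {F : Finset (Finset V)} {N : Finset V} {B : ℝ} {c : Fin C} {ω ω' : ProcSpace G C}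

lemma retainsColor_congr {x : V} (hx : ω.1 x = c ↔ ω'.1 x = c)
    (hnbr : ω.1 x = c → ∀ w (h : G.Adj x w), (ω.1 w = c ↔ ω'.1 w = c) ∧
      (ω.1 w = c → ω.2 ⟨s(x, w), G.mem_edgeSet.mpr h⟩ = ω'.2 ⟨s(x, w), G.mem_edgeSet.mpr h⟩)) :
    RetainsColor G c ω x ↔ RetainsColor G c ω' x := by
  unfold RetainsColor keepsColor pointsTo
  rw [← hx]
  refine and_congr_right fun hxc => ?_
  rw [hxc, hx.1 hxc]
  refine forall₂_congr fun w h => ?_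
  obtain ⟨color_iff, orientation_eq⟩ := hnbr hxc w h
  rw [← color_iff]
  exact forall_congr' fun hw => by rw [orientation_eq hw]

lemma classCount_congr
    (h : ∀ p ∈ F, ∀ x ∈ p, RetainsColor G c ω x ↔ RetainsColor G c ω' x) :
    classCount G F c ω = classCount G F c ω' := by
  classical
  unfold classCount
  congr 1
  exact filter_congr fun p hp => forall₂_congr fun x hx => h p hp x hx

lemma abs_truncCount_sub_le (hB : 0 ≤ B) (T : Finset (Fin C))
    (hT : ∀ c ∉ T, classCount G F c ω = classCount G F c ω') :
    |truncCount G F B ω - truncCount G F B ω'| ≤ #T * B := by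
  unfold truncCount
  rw [← sum_sub_distrib]
  refine (abs_sum_le_sum_abs _ _).trans ?_
  rw [← sum_subset (subset_univ T) fun c _ hc => by rw [hT c hc, sub_self, abs_zero],
    ← nsmul_eq_mul]
  exact sum_le_card_nsmul _ _ _ fun c _ => abs_sub_le_of_nonneg_of_le
    (by positivity) (min_le_right _ _) (by positivity) (min_le_right _ _)

lemma truncCount_congr (h : ∀ c, classCount G F c ω = classCount G F c ω') :
    truncCount G F B ω = truncCount G F B ω' :=
  sum_congr rfl fun c _ => by rw [h c]

section ColorInfluence

variable (x : V → Fin C) (σ : G.edgeSet → Bool) (w : V) {a b : Fin C}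

lemma classCount_update_color_of_ne (ha : c ≠ a) (hb : c ≠ b) :
    classCount G F c (update x w a, σ) = classCount G F c (update x w b, σ) := by
  have color_iff (y : V) : update x w a y = c ↔ update x w b y = c := by
    obtain rfl | hyw := eq_or_ne y w
    · simp [ha.symm, hb.symm]
    · simp [hyw]
  exact classCount_congr fun _ _ y _ =>
    retainsColor_congr (color_iff y) fun _ z _ => ⟨color_iff z, fun _ => rfl⟩

variable {x w}

lemma classCount_update_color_of_notMem (hF : ∀ p ∈ F, p ⊆ N) (hw : w ∉ N)
    (hc : ∀ y ∈ N, G.Adj w y → x y ≠ c) :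
    classCount G F c (update x w a, σ) = classCount G F c (update x w b, σ) := by
  refine classCount_congr fun p hp y hy => ?_
  have hyN := hF p hp hy
  have hyw : y ≠ w := ne_of_mem_of_not_mem hyN hw
  refine retainsColor_congr (by simp [hyw]) fun hyc z hz => ?_
  have hzw : z ≠ w := by
    rintro rfl
    exact hc y hyN hz.symm (by simpa [hyw] using hyc)
  simp [hzw]

variable (x w)

lemma abs_truncCount_update_color_sub_le (hB : 0 ≤ B) (a b : Fin C) :
    |truncCount G F B (update x w a, σ) - truncCount G F B (update x w b, σ)| ≤ 2 * B := by
  refine (abs_truncCount_sub_le hB {a, b} fun c hc => ?_).trans ?_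
  · simp only [mem_insert, mem_singleton, not_or] at hc
    exact classCount_update_color_of_ne x σ w hc.1 hc.2
  · gcongr
    exact_mod_cast card_le_two

variable {w}

lemma truncCount_update_color_of_notMem (hF : ∀ p ∈ F, p ⊆ N) (hw : w ∉ N)
    (ha : ∀ y ∈ N, G.Adj w y → x y ≠ a) (hb : ∀ y ∈ N, G.Adj w y → x y ≠ b) :
    truncCount G F B (update x w a, σ) = truncCount G F B (update x w b, σ) := by
  refine truncCount_congr fun c => ?_
  by_cases hc : ∀ y ∈ N, G.Adj w y → x y ≠ c
  · exact classCount_update_color_of_notMem σ hF hw hc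
  · push Not at hc
    obtain ⟨y, hyN, hwy, rfl⟩ := hc
    exact classCount_update_color_of_ne x σ w (ha y hyN hwy) (hb y hyN hwy)

variable (w)

-- A vertex outside `N` matters only if its color occurs among its neighbors in `N`.
lemma expect_sq_truncCount_update_color_sub_le [DecidableRel G.Adj] [NeZero C]
    (hF : ∀ p ∈ F, p ⊆ N) (hB : 0 ≤ B) :
    𝔼 a, 𝔼 b, (truncCount G F B (update x w a, σ) - truncCount G F B (update x w b, σ)) ^ 2 ≤
      (2 * B) ^ 2 * ((if w ∈ N then 1 else 0) + 2 * #{y ∈ N | G.Adj w y} / C) := by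
  have sq_le (a b : Fin C) : (truncCount G F B (update x w a, σ) -
      truncCount G F B (update x w b, σ)) ^ 2 ≤ (2 * B) ^ 2 :=
    sq_le_sq.2 ((abs_truncCount_update_color_sub_le x σ w hB a b).trans (le_abs_self _))
  by_cases hw : w ∈ N
  · rw [if_pos hw]
    refine (expect_le univ_nonempty fun a _ => expect_le univ_nonempty fun b _ =>
      sq_le a b).trans (le_mul_of_one_le_right (sq_nonneg _) ?_)
    exact le_add_of_nonneg_right (by positivity)
  · set I := {y ∈ N | G.Adj w y}.image x
    have pointwise (a b : Fin C) : (truncCount G F B (update x w a, σ) -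
        truncCount G F B (update x w b, σ)) ^ 2 ≤
          (2 * B) ^ 2 * ((if a ∈ I then 1 else 0) + (if b ∈ I then 1 else 0)) := by
      by_cases hab : a ∈ I ∨ b ∈ I
      · refine (sq_le a b).trans (le_mul_of_one_le_right (sq_nonneg _) ?_)
        rcases hab with h | h <;> simp only [h, if_true] <;> split_ifs <;> norm_num
      · obtain ⟨ha, hb⟩ := not_or.1 hab
        rw [truncCount_update_color_of_notMem x σ hF hw
          (fun y hy hwy hya => ha (mem_image.2 ⟨y, mem_filter.2 ⟨hy, hwy⟩, hya⟩))
          fun y hy hwy hyb => hb (mem_image.2 ⟨y, mem_filter.2 ⟨hy, hwy⟩, hyb⟩)]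
        simp [ha, hb]
    have expect_indicator : 𝔼 a, (if a ∈ I then (1 : ℝ) else 0) = #I / C := by
      rw [Fintype.expect_eq_sum_div_card, sum_boole, Fintype.card_fin, filter_univ_mem]
    refine (expect_le_expect fun a _ => expect_le_expect fun b _ => pointwise a b).trans ?_
    simp only [← mul_expect, expect_add_distrib, Fintype.expect_const, expect_indicator, hw,
      if_false, zero_add, ← two_mul, mul_div_assoc]
    gcongr
    exact card_image_le

end ColorInfluence

section OrientationInfluence

lemma classCount_update_orientation (x : V → Fin C) (σ : G.edgeSet → Bool) (e : G.edgeSet)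
    (a b : Bool) (hF : ∀ p ∈ F, p ⊆ N)
    (he : (∃ z ∈ N, z ∈ (e : Sym2 V)) → ¬ ∀ z ∈ (e : Sym2 V), x z = c) :
    classCount G F c (x, update σ e a) = classCount G F c (x, update σ e b) := by
  refine classCount_congr fun p hp y hy => retainsColor_congr Iff.rfl fun hyc z hz =>
    ⟨Iff.rfl, fun hzc => ?_⟩
  have hne : (⟨s(y, z), G.mem_edgeSet.mpr hz⟩ : G.edgeSet) ≠ e := by
    rintro rfl
    refine he ⟨y, hF p hp hy, Sym2.mem_mk_left _ _⟩ fun t ht => ?_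
    rcases Sym2.mem_iff.1 ht with rfl | rfl
    exacts [hyc, hzc]
  simp [hne]

lemma abs_truncCount_update_orientation_sub_le (hF : ∀ p ∈ F, p ⊆ N) (hB : 0 ≤ B) {p q : V}
    (hpq : G.Adj p q) (x : V → Fin C) (σ : G.edgeSet → Bool) (a b : Bool) :
    |truncCount G F B (x, update σ ⟨s(p, q), G.mem_edgeSet.mpr hpq⟩ a) -
      truncCount G F B (x, update σ ⟨s(p, q), G.mem_edgeSet.mpr hpq⟩ b)| ≤
        B * {x : V → Fin C | x p = x q}.indicator 1 x := by
  by_cases hx : x p = x q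
  · refine (abs_truncCount_sub_le hB {x p} fun c hc =>
      classCount_update_orientation x σ _ a b hF fun _ mono => hc ?_).trans ?_
    · exact mem_singleton.2 (mono p (Sym2.mem_mk_left _ _)).symm
    · simp [hx]
  · have unchanged (c : Fin C) := classCount_update_orientation (F := F) (c := c) x σ
      ⟨s(p, q), G.mem_edgeSet.mpr hpq⟩ a b hF fun _ mono =>
        hx ((mono p (Sym2.mem_mk_left _ _)).trans (mono q (Sym2.mem_mk_right _ _)).symm)
    simp [truncCount_congr unchanged, hx]

variable [Fintype V]

-- An orientation matters only if its edge is monochromatic, which has probability `1 / C`.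
lemma abs_expect_truncCount_update_orientation_sub_le [NeZero C] (hF : ∀ p ∈ F, p ⊆ N)
    (hB : 0 ≤ B) (e : G.edgeSet) (σ : G.edgeSet → Bool) (a b : Bool) :
    |𝔼 x : V → Fin C, truncCount G F B (x, update σ e a) -
      𝔼 x : V → Fin C, truncCount G F B (x, update σ e b)| ≤
        B / C * (if ∃ z ∈ N, z ∈ (e : Sym2 V) then 1 else 0) := by
  split_ifs with hN
  · obtain ⟨⟨p, q⟩, hpq⟩ := e
    calc |𝔼 x : V → Fin C, truncCount G F B (x, update σ ⟨s(p, q), hpq⟩ a) -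
          𝔼 x : V → Fin C, truncCount G F B (x, update σ ⟨s(p, q), hpq⟩ b)|
        ≤ 𝔼 x, B * {x : V → Fin C | x p = x q}.indicator 1 x := by
          rw [← expect_sub_distrib]
          exact (abs_expect_le _ _).trans (expect_le_expect fun x _ =>
            abs_truncCount_update_orientation_sub_le hF hB (G.mem_edgeSet.1 hpq) x σ a b)
      _ = B * uniformProb {x : V → Fin C | x p = x q} := by
          rw [← mul_expect, uniformProb_eq_expect_indicator]
      _ ≤ B / C * 1 := by
          rw [mul_one, div_eq_mul_one_div]
          gcongr
          simpa using uniformProb_apply_eq_apply_le (Ω := Fin C) (G.mem_edgeSet.1 hpq).ne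
  · have unchanged (x : V → Fin C) :
        truncCount G F B (x, update σ e a) = truncCount G F B (x, update σ e b) :=
      truncCount_congr fun c => classCount_update_orientation x σ e a b hF fun h => (hN h).elim
    simp [unchanged]

end OrientationInfluence

variable [NeZero C]

lemma boundedInfluence_truncCount_color [DecidableRel G.Adj] (hF : ∀ p ∈ F, p ⊆ N)
    (hB : 0 ≤ B) (σ : G.edgeSet → Bool) :
    BoundedInfluence (fun x : V → Fin C => truncCount G F B (x, σ)) (2 * B)
      (fun w => (2 * B) ^ 2 * ((if w ∈ N then 1 else 0) + 2 * #{y ∈ N | G.Adj w y} / C)) where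
  abs_sub_le w x a b := abs_truncCount_update_color_sub_le x σ w hB a b
  expect_sq_le w x := expect_sq_truncCount_update_color_sub_le x σ w hF hB

lemma boundedInfluence_expect_truncCount_orientation [Fintype V]
    (hF : ∀ p ∈ F, p ⊆ N) (hB : 0 ≤ B) :
    BoundedInfluence (fun σ : G.edgeSet → Bool => 𝔼 x : V → Fin C, truncCount G F B (x, σ)) (2 * B)
      (fun e => (B / C * (if ∃ z ∈ N, z ∈ (e : Sym2 V) then 1 else 0)) ^ 2) := by
  refine .of_abs_le (fun e => ?_) fun e σ a b =>
    abs_expect_truncCount_update_orientation_sub_le hF hB e σ a b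
  have hC : (1 : ℝ) ≤ C := mod_cast NeZero.one_le
  have : B / C ≤ B := div_le_self hB hC
  split_ifs <;> linarith

variable [Fintype V] [DecidableRel G.Adj]

lemma expect_exp_mul_truncCount_le (hF : ∀ p ∈ F, p ⊆ N) (hB : 0 ≤ B) {lam D : ℝ}
    (hD : ∑ y ∈ N, (G.degree y : ℝ) ≤ D) (hlam : |lam| * (2 * B) ≤ 1) :
    𝔼 ω : ProcSpace G C, Real.exp (lam * truncCount G F B ω) ≤
      Real.exp (lam ^ 2 * ((2 * B) ^ 2 * (#N + 2 * D / C) + (B / C) ^ 2 * D) +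
        lam * 𝔼 ω : ProcSpace G C, truncCount G F B ω) := by
  refine (expect_exp_mul_le_of_boundedInfluence (boundedInfluence_truncCount_color hF hB)
    (boundedInfluence_expect_truncCount_orientation hF hB) hlam).trans ?_
  gcongr
  · rw [← mul_sum, sum_add_distrib, sum_boole, filter_univ_mem, ← sum_div, ← mul_sum]
    gcongr
    refine le_trans (le_of_eq ?_) hD
    exact_mod_cast sum_card_filter_adj_eq_sum_degree G N
  · simp only [mul_pow, ite_pow, one_pow, zero_pow two_ne_zero]
    rw [← mul_sum, sum_boole]
    gcongr
    refine le_trans ?_ hD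
    exact_mod_cast card_filter_exists_mem_edge_le_sum_degree G N

end TruncatedCount

section SavedCount

open Finset
open scoped BigOperators

variable {V : Type} [LinearOrder V] {G : SimpleGraph V} {C m : ℕ} {F : Finset (Finset V)}
  {N : Finset V} {B : ℝ}

lemma savedCount_eq_sum_classCount (hF : ∀ p ∈ F, p.Nonempty) (ω : ProcSpace G C) :
    savedCount G F ω = ∑ c, classCount G F c ω := by
  classical
  unfold savedCount classCount
  rw [← card_biUnion]
  · congr 1
    ext p
    simp only [mem_filter, mem_biUnion, mem_univ, true_and, exists_and_left]
  · intro c _ c' _ hcc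
    refine disjoint_left.2 fun p hp hp' => hcc ?_
    obtain ⟨hpF, hpc⟩ := mem_filter.1 hp
    obtain ⟨x, hx⟩ := hF p hpF
    exact (hpc x hx).1.symm.trans ((mem_filter.1 hp').2 x hx).1

lemma classCount_le_card_pow (hF : F ⊆ N.powersetCard m) (c : Fin C) (ω : ProcSpace G C) :
    classCount G F c ω ≤ #{y ∈ N | ω.1 y = c} ^ m := by
  classical
  refine (card_le_card fun p hp => ?_).trans
    ((card_powersetCard m {y ∈ N | ω.1 y = c}).trans_le (Nat.choose_le_pow _ _))
  obtain ⟨hpF, hpc⟩ := mem_filter.1 hp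
  obtain ⟨hpN, hpm⟩ := mem_powersetCard.1 (hF hpF)
  exact mem_powersetCard.2 ⟨fun x hx => mem_filter.2 ⟨hpN hx, (hpc x hx).1⟩, hpm⟩

lemma savedCount_le_card_pow (hF : F ⊆ N.powersetCard m) (ω : ProcSpace G C) :
    savedCount G F ω ≤ #N ^ m := by
  classical
  exact (card_le_card ((filter_subset _ F).trans hF)).trans
    ((card_powersetCard m N).trans_le (Nat.choose_le_pow _ _))

lemma truncCount_nonneg (hB : 0 ≤ B) (ω : ProcSpace G C) : 0 ≤ truncCount G F B ω :=
  sum_nonneg fun _ _ => by positivity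

lemma truncCount_le_savedCount (hF : ∀ p ∈ F, p.Nonempty) (ω : ProcSpace G C) :
    truncCount G F B ω ≤ savedCount G F ω := by
  rw [savedCount_eq_sum_classCount hF, Nat.cast_sum]
  exact sum_le_sum fun _ _ => min_le_left _ _

lemma savedCount_eq_truncCount (hF : ∀ p ∈ F, p.Nonempty) {ω : ProcSpace G C}
    (hω : ∀ c, (classCount G F c ω : ℝ) ≤ B) : (savedCount G F ω : ℝ) = truncCount G F B ω := by
  rw [savedCount_eq_sum_classCount hF, Nat.cast_sum]
  exact sum_congr rfl fun c _ => (min_eq_left (hω c)).symm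

-- Outside the event that some color occurs more than `L` times in `N`, nothing is truncated.
lemma uniformProb_le_abs_savedCount_sub_expect_le [Fintype V] [DecidableRel G.Adj] [NeZero C]
    (hm : m ≠ 0) (hF : F ⊆ N.powersetCard m) {L D lam b : ℝ} (t : ℝ) (hL : 0 ≤ L)
    (hD : ∑ y ∈ N, (G.degree y : ℝ) ≤ D) (hlam₀ : 0 ≤ lam) (hlam : lam * (2 * L ^ m) ≤ 1)
    (hb : C * ((#N).choose (⌊L⌋₊ + 1) * (1 / C : ℝ) ^ (⌊L⌋₊ + 1)) ≤ b)
    (hNb : (#N : ℝ) ^ m * b ≤ 1) :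
    uniformProb {ω : ProcSpace G C | t ≤
        |(savedCount G F ω : ℝ) - 𝔼 ω' : ProcSpace G C, (savedCount G F ω' : ℝ)|} ≤
      b + 2 * Real.exp (lam ^ 2 * ((2 * L ^ m) ^ 2 * (#N + 2 * D / C) + (L ^ m / C) ^ 2 * D) -
        lam * (t - 1)) := by
  have hB : 0 ≤ L ^ m := by positivity
  have subset_N (p) (hp : p ∈ F) : p ⊆ N := (mem_powersetCard.1 (hF hp)).1
  have nonempty (p) (hp : p ∈ F) : p.Nonempty :=
    card_ne_zero.1 ((mem_powersetCard.1 (hF hp)).2 ▸ hm)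
  set A : Set (ProcSpace G C) :=
    Prod.fst ⁻¹' {f : V → Fin C | ∃ c, ⌊L⌋₊ + 1 ≤ #{y ∈ N | f y = c}}
  have uniformProb_A : uniformProb A ≤ b := by
    rw [uniformProb_fst_preimage]
    exact (uniformProb_exists_le_card_filter_eq_le N _).trans (by simpa using hb)
  have eq_outside (ω) (hω : ω ∉ A) : (savedCount G F ω : ℝ) = truncCount G F (L ^ m) ω := by
    refine savedCount_eq_truncCount nonempty fun c => ?_
    have class_lt : #{y ∈ N | ω.1 y = c} < ⌊L⌋₊ + 1 := not_le.1 fun h => hω ⟨c, h⟩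
    have class_le : (#{y ∈ N | ω.1 y = c} : ℝ) ≤ L :=
      (Nat.le_floor_iff hL).1 (Nat.lt_succ_iff.1 class_lt)
    calc (classCount G F c ω : ℝ) ≤ (#{y ∈ N | ω.1 y = c} : ℝ) ^ m :=
          mod_cast classCount_le_card_pow hF c ω
      _ ≤ L ^ m := by gcongr
  have abs_sub_le (ω : ProcSpace G C) :
      |(savedCount G F ω : ℝ) - truncCount G F (L ^ m) ω| ≤ (#N : ℝ) ^ m := by
    rw [abs_of_nonneg (sub_nonneg.2 (truncCount_le_savedCount nonempty ω))]
    exact (sub_le_self _ (truncCount_nonneg hB ω)).trans (mod_cast savedCount_le_card_pow hF ω)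
  have abs_lam : |lam| * (2 * L ^ m) ≤ 1 := by rwa [abs_of_nonneg hlam₀]
  refine (uniformProb_le_abs_sub_expect_le_add t eq_outside abs_sub_le
    ((by gcongr : _ ≤ (#N : ℝ) ^ m * b).trans hNb)).trans (add_le_add uniformProb_A ?_)
  refine uniformProb_le_abs_sub_expect_le hlam₀
    (expect_exp_mul_truncCount_le subset_N hB hD abs_lam) ?_
  rw [← neg_sq lam]
  exact expect_exp_mul_truncCount_le subset_N hB hD (by rwa [abs_neg])

end SavedCount

section Numerics

open Real

lemma mul_choose_mul_inv_pow_le {κ L : ℝ} {n k C : ℕ} (hκ : 1 ≤ κ) (hκL : κ ≤ L)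
    (hn : n ≤ exp L) (hC : C ≠ 0) (hnC : n ≤ κ * C) (hk : L ≤ k) :
    C * (n.choose k * (1 / C : ℝ) ^ k) ≤ exp (L * (2 + log κ - log L)) := by
  have hL₀ : 0 < L := by linarith
  have hC₀ : (0 : ℝ) < C := by positivity
  have ratio_le_one : κ / L ≤ 1 := (div_le_one hL₀).2 hκL
  obtain ⟨j, rfl⟩ : ∃ j, k = j + 1 :=
    Nat.exists_eq_succ_of_ne_zero fun h => by simp [h] at hk; linarith
  have pow_ratio_le : (κ / L) ^ (j + 1) ≤ exp (L * (log κ - log L)) :=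
    calc (κ / L) ^ (j + 1) = (κ / L) ^ ((j + 1 : ℕ) : ℝ) := (rpow_natCast _ _).symm
      _ ≤ (κ / L) ^ L := rpow_le_rpow_of_exponent_ge (by positivity) ratio_le_one hk
      _ = exp (L * (log κ - log L)) := by
        rw [rpow_def_of_pos (by positivity), log_div (by positivity) (by positivity), mul_comm]
  calc C * (n.choose (j + 1) * (1 / C : ℝ) ^ (j + 1))
      ≤ C * (n ^ (j + 1) / (j + 1).factorial * (1 / C) ^ (j + 1)) := by
        gcongr
        exact Nat.choose_le_pow_div _ _
    _ = n * (n / C) ^ j / (j + 1).factorial := by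
        rw [pow_succ, pow_succ, div_pow, div_pow, one_pow]
        field_simp
    _ ≤ exp L * κ ^ (j + 1) / (j + 1).factorial := by
        have : (n / C : ℝ) ≤ κ := (div_le_iff₀ hC₀).2 hnC
        gcongr
        calc (n / C : ℝ) ^ j ≤ κ ^ j := by gcongr
          _ ≤ κ ^ (j + 1) := pow_le_pow_right₀ hκ j.le_succ
    _ = exp L * (κ / L) ^ (j + 1) * (L ^ (j + 1) / (j + 1).factorial) := by
        rw [div_pow]
        field_simp
    _ ≤ exp L * exp (L * (log κ - log L)) * exp L := by
        gcongr
        exact pow_div_factorial_le_exp _ hL₀.le _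
    _ = exp (L * (2 + log κ - log L)) := by
        rw [← exp_add, ← exp_add]
        ring_nf

lemma varianceProxy_le {κ r n C B : ℝ} (hn : n ≤ r) (hr : 1 ≤ r) (hC : 0 < C) (hrC : r ≤ κ * C) :
    (2 * B) ^ 2 * (n + 2 * (r * r) / C) + (B / C) ^ 2 * (r * r) ≤
      (4 + 8 * κ + κ ^ 2) * (r * B ^ 2) := by
  have ratio_le : r / C ≤ κ := (div_le_iff₀ hC).2 hrC
  calc (2 * B) ^ 2 * (n + 2 * (r * r) / C) + (B / C) ^ 2 * (r * r)
      = B ^ 2 * (4 * n + 8 * (r / C) * r + (r / C) ^ 2) := by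
        field_simp
        ring
    _ ≤ B ^ 2 * (4 * r + 8 * κ * r + κ ^ 2 * r) := by
        have : (r / C) ^ 2 ≤ κ ^ 2 * r :=
          (by gcongr : (r / C) ^ 2 ≤ κ ^ 2).trans (le_mul_of_one_le_right (by positivity) hr)
        gcongr
    _ = (4 + 8 * κ + κ ^ 2) * (r * B ^ 2) := by ring

lemma chernoff_exponent_le {a q L l B W : ℝ} (hq : 0 < q) (hB : 0 < B) (hl : 0 ≤ l)
    (hqB : 2 ≤ q * B) (hW : W ≤ a * (q ^ 2 * B ^ 2)) :
    (2 * l / (q * B)) ^ 2 * W - 2 * l / (q * B) * (q * (B * L) - 1) ≤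
      4 * a * l ^ 2 - 2 * l * L + l := by
  have quadratic : (2 * l / (q * B)) ^ 2 * W ≤ 4 * a * l ^ 2 :=
    calc (2 * l / (q * B)) ^ 2 * W ≤ (2 * l / (q * B)) ^ 2 * (a * (q ^ 2 * B ^ 2)) := by gcongr
      _ = 4 * a * l ^ 2 := by
        field_simp
        ring
  have linear : 2 * l / (q * B) * (q * (B * L)) = 2 * l * L := by field_simp
  have lam_le : 2 * l / (q * B) ≤ l := by
    rw [div_le_iff₀ (by positivity)]
    linarith [mul_le_mul_of_nonneg_left hqB hl]
  rw [mul_sub, linear, mul_one]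
  linarith

/-- The conditions under which the tail bound holds with `L = log r`: the first one makes color
classes of size `L` unlikely, the second one makes the Chernoff exponent at most `-L log L / 2`. -/
structure IsLarge (κ : ℝ) (m : ℕ) (L : ℝ) : Prop where
  add_log_le : m + 6 + 2 * log κ ≤ log L
  mul_log_le : 4 * (4 + 8 * κ + κ ^ 2) * log L + 2 ≤ L

lemma eventually_isLarge (κ : ℝ) (m : ℕ) : ∀ᶠ L in Filter.atTop, IsLarge κ m L := by
  set a := 4 * (4 + 8 * κ + κ ^ 2)
  have small_log := isLittleO_log_id_atTop.bound (c := 1 / (2 * (|a| + 1))) (by positivity)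
  filter_upwards [small_log, tendsto_log_atTop.eventually_ge_atTop (m + 6 + 2 * log κ),
    Filter.eventually_ge_atTop 4] with L hlog hadd hL
  refine ⟨hadd, ?_⟩
  rw [id, norm_eq_abs, norm_eq_abs, abs_of_nonneg (by linarith : 0 ≤ L)] at hlog
  have : a * log L ≤ L / 2 :=
    calc a * log L ≤ |a| * |log L| := (le_abs_self _).trans_eq (abs_mul _ _)
      _ ≤ (|a| + 1) * (1 / (2 * (|a| + 1)) * L) := by gcongr; linarith
      _ = L / 2 := by field_simp
  linarith

namespace IsLarge

variable {κ L : ℝ} {m : ℕ}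

lemma six_le_log (h : IsLarge κ m L) (hκ : 1 ≤ κ) : 6 ≤ log L := by
  linarith [h.add_log_le, log_nonneg hκ, m.cast_nonneg (α := ℝ)]

lemma mul_log_add_two_le (h : IsLarge κ m L) (hκ : 1 ≤ κ) : 52 * log L + 2 ≤ L := by
  have : 13 ≤ 4 + 8 * κ + κ ^ 2 := by linarith [one_le_pow₀ hκ (n := 2)]
  have := mul_le_mul_of_nonneg_right this (by linarith [h.six_le_log hκ] : 0 ≤ log L)
  linarith [h.mul_log_le]

lemma le_self (h : IsLarge κ m L) (hκ : 1 ≤ κ) : κ ≤ L := by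
  have hL : 0 < L := by linarith [h.six_le_log hκ, h.mul_log_add_two_le hκ]
  rw [← log_le_log_iff (by linarith) hL]
  linarith [h.add_log_le, log_nonneg hκ, m.cast_nonneg (α := ℝ)]

lemma exp_pow_mul_exp_le_one (h : IsLarge κ m L) (hκ : 1 ≤ κ) :
    exp L ^ m * exp (L * (2 + log κ - log L)) ≤ 1 := by
  have hL : 0 ≤ L := by linarith [h.six_le_log hκ, h.mul_log_add_two_le hκ]
  rw [← exp_nat_mul, ← exp_add, exp_le_one_iff]
  calc m * L + L * (2 + log κ - log L) = L * (m + 2 + log κ - log L) := by ring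
    _ ≤ 0 := mul_nonpos_of_nonneg_of_nonpos hL (by linarith [h.add_log_le, log_nonneg hκ])

lemma exp_add_exp_le (h : IsLarge κ m L) (hκ : 1 ≤ κ) :
    exp (L * (2 + log κ - log L)) +
        2 * exp (4 * (4 + 8 * κ + κ ^ 2) * log L ^ 2 - 2 * log L * L + log L) ≤
      exp (-(1 / 2) * (L * log L)) := by
  set l := log L
  have hl : 6 ≤ l := h.six_le_log hκ
  have hL : 1 ≤ L := by linarith [h.mul_log_add_two_le hκ]
  have two_le : (2 : ℝ) ≤ exp 1 := by linarith [add_one_le_exp (1 : ℝ)]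
  have first : 2 * exp (L * (2 + log κ - l)) ≤ exp (-(1 / 2) * (L * l)) :=
    calc 2 * exp (L * (2 + log κ - l)) ≤ exp 1 * exp (L * (2 + log κ - l)) := by gcongr
      _ ≤ exp (-(1 / 2) * (L * l)) := by
        rw [← exp_add, exp_le_exp]
        have : 6 + 2 * log κ ≤ l := by linarith [h.add_log_le, m.cast_nonneg (α := ℝ)]
        linarith [mul_le_mul_of_nonneg_left this (by linarith : 0 ≤ L)]
  have second : 2 * (2 * exp (4 * (4 + 8 * κ + κ ^ 2) * l ^ 2 - 2 * l * L + l)) ≤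
      exp (-(1 / 2) * (L * l)) :=
    calc 2 * (2 * exp (4 * (4 + 8 * κ + κ ^ 2) * l ^ 2 - 2 * l * L + l))
        ≤ exp 1 * (exp 1 * exp (4 * (4 + 8 * κ + κ ^ 2) * l ^ 2 - 2 * l * L + l)) := by gcongr
      _ ≤ exp (-(1 / 2) * (L * l)) := by
        rw [← exp_add, ← exp_add, exp_le_exp]
        have := mul_le_mul_of_nonneg_left h.mul_log_le (by linarith : 0 ≤ l)
        linarith [mul_nonneg (by linarith : 0 ≤ L) (by linarith : 0 ≤ l)]
  linarith

variable {r : ℕ}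

lemma one_le_of_log (h : IsLarge κ m (log r)) (hκ : 1 ≤ κ) : 1 ≤ r := by
  by_contra! hr
  have := h.mul_log_add_two_le hκ
  norm_num [Nat.lt_one_iff.1 hr] at this

lemma log_log_le_sqrt (h : IsLarge κ m (log r)) (hκ : 1 ≤ κ) : 4 * log (log r) ≤ √r := by
  have hr : (0 : ℝ) < r := mod_cast h.one_le_of_log hκ
  have := log_le_sub_one_of_pos (sqrt_pos.2 hr)
  rw [log_sqrt hr.le] at this
  linarith [h.mul_log_add_two_le hκ, h.six_le_log hκ]

end IsLarge

end Numerics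

section Concentration

open Finset Real
open scoped BigOperators

variable {V : Type} [Fintype V] [LinearOrder V] {G : SimpleGraph V} [DecidableRel G.Adj]

lemma uniformProb_savedCount_tail_le {κ : ℝ} {m r C : ℕ} {F : Finset (Finset V)} {N : Finset V}
    (hκ : 1 ≤ κ) (hr : IsLarge κ m (log r)) (hm : m ≠ 0) (hrC : r ≤ κ * C) (hN : #N ≤ r)
    (hdeg : ∑ y ∈ N, (G.degree y : ℝ) ≤ r * r) (hF : F ⊆ N.powersetCard m) :
    uniformProb {ω : ProcSpace G C | √r * log r ^ (m + 1) ≤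
        |(savedCount G F ω : ℝ) - 𝔼 ω' : ProcSpace G C, (savedCount G F ω' : ℝ)|} ≤
      (r : ℝ) ^ (-(1 / 2) * log (log r)) := by
  have hr₁ : (1 : ℝ) ≤ r := mod_cast hr.one_le_of_log hκ
  have hl : 6 ≤ log (log r) := hr.six_le_log hκ
  have hlr : 4 * log (log r) ≤ √r := hr.log_log_le_sqrt hκ
  set L := log r
  set l := log L
  set lam := 2 * l / (√r * L ^ m) with lam_def
  have hL : 1 ≤ L := by linarith [hr.mul_log_add_two_le hκ]
  have hB : 1 ≤ L ^ m := one_le_pow₀ hL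
  have exp_L : exp L = r := exp_log (by linarith)
  have hNr : (#N : ℝ) ≤ r := mod_cast hN
  have hC : (0 : ℝ) < C := by
    by_contra! h
    linarith [mul_nonpos_of_nonneg_of_nonpos (by linarith : 0 ≤ κ) h]
  have : NeZero C := ⟨by exact_mod_cast hC.ne'⟩
  have lam_mul_le : lam * (2 * L ^ m) ≤ 1 := by
    rw [lam_def, div_mul_eq_mul_div, div_le_one (by positivity)]
    linarith [mul_le_mul_of_nonneg_right hlr (by positivity : 0 ≤ L ^ m)]
  have large_class := mul_choose_mul_inv_pow_le (k := ⌊L⌋₊ + 1) hκ (hr.le_self hκ)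
    (hNr.trans exp_L.ge) (NeZero.ne C) (hNr.trans hrC) (mod_cast (Nat.lt_floor_add_one L).le)
  have pow_mul_le : (#N : ℝ) ^ m * exp (L * (2 + log κ - l)) ≤ 1 :=
    le_trans (by rw [exp_L]; gcongr) (hr.exp_pow_mul_exp_le_one hκ)
  refine (uniformProb_le_abs_savedCount_sub_expect_le hm hF _ (by linarith) hdeg
    (by positivity) lam_mul_le large_class pow_mul_le).trans ?_
  calc exp (L * (2 + log κ - l)) + 2 * exp (lam ^ 2 * ((2 * L ^ m) ^ 2 * (#N + 2 * (r * r) / C) +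
        (L ^ m / C) ^ 2 * (r * r)) - lam * (√r * L ^ (m + 1) - 1))
      ≤ exp (L * (2 + log κ - l)) +
          2 * exp (4 * (4 + 8 * κ + κ ^ 2) * l ^ 2 - 2 * l * L + l) := by
        gcongr
        rw [pow_succ L]
        refine chernoff_exponent_le (by positivity) (by positivity) (by linarith) ?_ ?_
        · nlinarith
        · rw [sq_sqrt (by linarith)]
          exact varianceProxy_le hNr hr₁ hC hrC
    _ ≤ exp (-(1 / 2) * (L * l)) := hr.exp_add_exp_le hκ
    _ = (r : ℝ) ^ (-(1 / 2) * l) := by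
        rw [← exp_L, ← exp_mul]
        ring_nf

variable (G)

/-- The independent sets of size `m` in the neighborhood of `u`. -/
def indepNeighborSets (u : V) (m : ℕ) : Finset (Finset V) :=
  {p ∈ (G.neighborFinset u).powersetCard m | ∀ x ∈ p, ∀ y ∈ p, ¬ G.Adj x y}

lemma mem_indepNeighborSets {u : V} {m : ℕ} {p : Finset V} :
    p ∈ indepNeighborSets G u m ↔
      ((∀ x ∈ p, G.Adj u x) ∧ #p = m) ∧ ∀ x ∈ p, ∀ y ∈ p, ¬ G.Adj x y := by
  simp [indepNeighborSets, mem_powersetCard, subset_iff]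

lemma pairsSaved_eq_savedCount {C : ℕ} (u : V) (ω : ProcSpace G C) :
    pairsSaved G u ω = savedCount G (indepNeighborSets G u 2) ω := by
  classical
  rw [pairsSaved, savedCount, ← Set.ncard_coe_finset]
  congr 1
  ext p
  simp only [coe_filter, mem_indepNeighborSets, Set.mem_ofPred_eq]
  constructor
  · rintro ⟨x, y, hxy, rfl, hux, huy, hadj, hc, kx, ky⟩
    refine ⟨⟨⟨?_, card_pair hxy⟩, ?_⟩, ω.1 y, ?_⟩ <;>
      simp [RetainsColor, hux, huy, hadj, G.adj_comm y x, hc, kx, ky]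
  · rintro ⟨⟨⟨hu, hcard⟩, hadj⟩, c, hc⟩
    obtain ⟨x, y, hxy, rfl⟩ := card_eq_two.1 hcard
    simp only [mem_insert, mem_singleton, forall_eq_or_imp, forall_eq] at hu hadj hc
    exact ⟨x, y, hxy, rfl, hu.1, hu.2, hadj.1.2, hc.1.1.trans hc.2.1.symm, hc.1.2, hc.2.2⟩

lemma triplesSaved_eq_savedCount {C : ℕ} (u : V) (ω : ProcSpace G C) :
    triplesSaved G u ω = savedCount G (indepNeighborSets G u 3) ω := by
  classical
  rw [triplesSaved, savedCount, ← Set.ncard_coe_finset]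
  congr 1
  ext p
  simp only [coe_filter, mem_indepNeighborSets, Set.mem_ofPred_eq]
  constructor
  · rintro ⟨x, y, z, hxy, hxz, hyz, rfl, hux, huy, huz, nxy, nxz, nyz, cxy, cyz, kx, ky, kz⟩
    refine ⟨⟨⟨?_, card_eq_three.2 ⟨x, y, z, hxy, hxz, hyz, rfl⟩⟩, ?_⟩, ω.1 z, ?_⟩ <;>
      simp [RetainsColor, hux, huy, huz, nxy, nxz, nyz, G.adj_comm y x, G.adj_comm z x,
        G.adj_comm z y, cxy, cyz, kx, ky, kz]
  · rintro ⟨⟨⟨hu, hcard⟩, hadj⟩, c, hc⟩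
    obtain ⟨x, y, z, hxy, hxz, hyz, rfl⟩ := card_eq_three.1 hcard
    simp only [mem_insert, mem_singleton, forall_eq_or_imp, forall_eq] at hu hadj hc
    obtain ⟨⟨cx, kx⟩, ⟨cy, ky⟩, cz, kz⟩ := hc
    exact ⟨x, y, z, hxy, hxz, hyz, rfl, hu.1, hu.2.1, hu.2.2, hadj.1.2.1, hadj.1.2.2,
      hadj.2.1.2.2, cx.trans cy.symm, cy.trans cz.symm, kx, ky, kz⟩

lemma procProb_savedCount_indepNeighborSets_tail_le {κ : ℝ} {m r C : ℕ} (hκ : 1 ≤ κ)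
    (hr : IsLarge κ m (log r)) (hm : m ≠ 0) (hrC : r ≤ κ * C) {u : V} (hu : G.degree u ≤ r)
    (hnbr : ∀ v, G.Adj u v → G.degree v ≤ r) :
    procProb G C {ω | √r * log r ^ (m + 1) ≤ |(savedCount G (indepNeighborSets G u m) ω : ℝ) -
        procExp G C fun ω' => (savedCount G (indepNeighborSets G u m) ω' : ℝ)|} ≤
      (r : ℝ) ^ (-(1 / 2) * log (log r)) := by
  simp only [procExp, ← Fintype.expect_eq_sum_div_card]
  refine uniformProb_savedCount_tail_le hκ hr hm hrC hu ?_ (filter_subset _ _)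
  calc ∑ y ∈ G.neighborFinset u, (G.degree y : ℝ) ≤ G.degree u * r := by
        rw [← G.card_neighborFinset_eq_degree, ← nsmul_eq_mul]
        exact sum_le_card_nsmul _ _ _ fun y hy => mod_cast hnbr y ((G.mem_neighborFinset u y).1 hy)
    _ ≤ r * r := by gcongr

end Concentration

theorem concentration_Pu_Tu_general (κ : ℝ) :
    ∃ R : ℕ, ∀ r : ℕ, R ≤ r → ∀ C : ℕ, (r : ℝ) ≤ κ * C →
      ∀ (V : Type) [Fintype V] [LinearOrder V] (G : SimpleGraph V) [DecidableRel G.Adj] (u : V),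
        G.degree u ≤ r → (∀ v, G.Adj u v → G.degree v ≤ r) →
        procProb G C {ω | Real.sqrt r * Real.log r ^ 3 ≤
            |(pairsSaved G u ω : ℝ) - procExp G C (fun ω' => (pairsSaved G u ω' : ℝ))|} ≤
          (r : ℝ) ^ (-(1 / 2) * Real.log (Real.log r)) ∧
        procProb G C {ω | Real.sqrt r * Real.log r ^ 4 ≤
            |(triplesSaved G u ω : ℝ) - procExp G C (fun ω' => (triplesSaved G u ω' : ℝ))|} ≤
          (r : ℝ) ^ (-(1 / 2) * Real.log (Real.log r)) := by
  have tendsto_log : Filter.Tendsto (fun r : ℕ => Real.log r) Filter.atTop Filter.atTop :=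
    Real.tendsto_log_atTop.comp tendsto_natCast_atTop_atTop
  obtain ⟨R, hR⟩ := Filter.eventually_atTop.1 (tendsto_log.eventually
    ((eventually_isLarge (max κ 1) 2).and (eventually_isLarge (max κ 1) 3)))
  refine ⟨R, fun r hr C hC V _ _ G _ u hu hnbr => ?_⟩
  have hC' : (r : ℝ) ≤ max κ 1 * C := hC.trans (by gcongr; exact le_max_left κ 1)
  simp only [pairsSaved_eq_savedCount, triplesSaved_eq_savedCount]
  exact ⟨procProb_savedCount_indepNeighborSets_tail_le G (le_max_right κ 1) (hR r hr).1
      two_ne_zero hC' hu hnbr,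
    procProb_savedCount_indepNeighborSets_tail_le G (le_max_right κ 1) (hR r hr).2
      three_ne_zero hC' hu hnbr⟩

/-- Concentration of `P_u` and `T_u`: for every `γ ∈ (0,1)` there is an `R` such that
for every `r`-regular graph `G` with `r ≥ R` and every vertex `u`, when the random
coloring procedure is performed with `⌈(1−γ)r⌉` colors,
`P[|P_u − E[P_u]| ≥ √r·(log r)³] ≤ r^{−(1/2)·log log r}` and
`P[|T_u − E[T_u]| ≥ √r·(log r)⁴] ≤ r^{−(1/2)·log log r}`. -/
theorem concentration_Pu_Tu (γ : ℝ) (hγ : γ ∈ Set.Ioo (0 : ℝ) 1) :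
    ∃ R : ℕ, ∀ r : ℕ, R ≤ r →
      ∀ (V : Type) [Fintype V] [LinearOrder V] (G : SimpleGraph V) [DecidableRel G.Adj],
        G.IsRegularOfDegree r → ∀ u : V,
        procProb G ⌈(1 - γ) * (r : ℝ)⌉₊
            {ω | Real.sqrt r * Real.log r ^ 3 ≤
              |(pairsSaved G u ω : ℝ) -
                procExp G ⌈(1 - γ) * (r : ℝ)⌉₊ (fun ω' => (pairsSaved G u ω' : ℝ))|} ≤
          (r : ℝ) ^ (-(1 / 2) * Real.log (Real.log r)) ∧
        procProb G ⌈(1 - γ) * (r : ℝ)⌉₊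
            {ω | Real.sqrt r * Real.log r ^ 4 ≤
              |(triplesSaved G u ω : ℝ) -
                procExp G ⌈(1 - γ) * (r : ℝ)⌉₊ (fun ω' => (triplesSaved G u ω' : ℝ))|} ≤
          (r : ℝ) ^ (-(1 / 2) * Real.log (Real.log r)) := by
  obtain ⟨R, hR⟩ := concentration_Pu_Tu_general (1 - γ)⁻¹
  exact ⟨R, fun r hr V _ _ G _ hG u => hR r hr _
    ((le_inv_mul_iff₀ (sub_pos.2 hγ.2)).2 (Nat.le_ceil _)) V G u (hG u).le fun v _ => (hG v).le⟩
end
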